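/- arXiv:2403.14875 — 3 statements merged into one kernel-verified Lean document; each statement's English description precedes it below -/
import Mathlib

section
/- Mihailova's theorem: for every n ≥ 2, the membership problem on F_n × F_n is undecidable; that is, there exists a finitely generated subgroup H of F_n × F_n such that there is no computable function deciding, given an element g of F_n × F_n, whether g ∈ H. -/
open Function

/-- Left translations of `G × X` on the first factor. -/
def leftTranslation (G X : Type*) [Group G] : G →* Equiv.Perm (G × X) where
  toFun g := (Equiv.mulLeft g).prodCongr (Equiv.refl X)
  map_one' := by ext x <;> simp
  map_mul' g h := by ext x <;> simp [mul_assoc]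

@[simp]
theorem leftTranslation_apply {G X : Type*} [Group G] (g : G) (p : G × X) :
    leftTranslation G X g p = (g * p.1, p.2) := rfl

/-- `G` decomposes as a product of `W` and the set `R` of right cosets of the image of `W`, using
coset representatives chosen in `K` whenever possible. -/
theorem exists_equiv_prod_cosets {G W : Type} [Group G] [Group W] (K : Subgroup G) (ι : W →* G)
    (hι : Injective ι) :
    ∃ (R : Type) (e : G ≃ W × R) (c : R → Prop), (∃ r, c r) ∧
      (∀ w g, e (ι w * g) = (w * (e g).1, (e g).2)) ∧
      ∀ g, g ∈ K ↔ c (e g).2 ∧ ι (e g).1 ∈ K := by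
  classical
  let st := QuotientGroup.rightRel ι.range
  have hrel : ∀ a b : G, st a b ↔ b * a⁻¹ ∈ ι.range := fun a b ↦ QuotientGroup.rightRel_apply
  have hrep : ∀ r : Quotient st, ∃ g : G, Quotient.mk st g = r ∧
      ((∃ g' ∈ K, Quotient.mk st g' = r) → g ∈ K) := by
    intro r
    by_cases h : ∃ g' ∈ K, Quotient.mk st g' = r
    · obtain ⟨g', hg', h'⟩ := h
      exact ⟨g', h', fun _ ↦ hg'⟩
    · obtain ⟨g, rfl⟩ := Quotient.exists_rep r
      exact ⟨g, rfl, fun h' ↦ (h h').elim⟩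
  choose rep hrep hrepK using hrep
  have hw : ∀ g : G, ∃ w : W, ι w = g * (rep (Quotient.mk st g))⁻¹ := fun g ↦
    (hrel _ _).1 (Quotient.exact (hrep (Quotient.mk st g)))
  choose wd hwd using hw
  have hmk : ∀ w g, Quotient.mk st (ι w * g) = Quotient.mk st g := fun w g ↦
    Quotient.sound ((hrel _ _).2 ⟨w⁻¹, by simp⟩)
  have hmul : ∀ w g, wd (ι w * g) = w * wd g := fun w g ↦ hι (by
    rw [map_mul, hwd, hwd, hmk, mul_assoc])
  let e : G ≃ W × Quotient st :=
    { toFun g := (wd g, Quotient.mk st g)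
      invFun p := ι p.1 * rep p.2
      left_inv g := by simp [hwd]
      right_inv p := by
        have h1 : wd (rep p.2) = 1 := hι (by rw [hwd, hrep, map_one, mul_inv_cancel])
        ext
        · simp only [hmul, h1, mul_one]
        · simp only [hmk, hrep] }
  refine ⟨Quotient st, e, fun r ↦ rep r ∈ K, ⟨Quotient.mk st 1, hrepK _ ⟨1, K.one_mem, rfl⟩⟩,
    fun w g ↦ Prod.ext (hmul w g) (hmk w g), fun g ↦ ?_⟩
  have hg : g = ι (wd g) * rep (Quotient.mk st g) := by simp [hwd]
  constructor
  · intro h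
    have h1 := hrepK _ ⟨g, h, rfl⟩
    refine ⟨h1, ?_⟩
    change ι (wd g) ∈ K
    rw [hwd]
    exact K.mul_mem h (K.inv_mem h1)
  · rintro ⟨h1, h2⟩
    rw [hg]
    exact K.mul_mem h2 h1

/-- The free `W`-set `G × (ℕ ⊕ ℕ)` together with the subset `K × ℕ` on the left only depends on
`W` and on the preimage of `K`. -/
theorem exists_equiv_free_action {G W : Type} [Group G] [Countable G] [Group W] (K : Subgroup G)
    (ι : W →* G) (hι : Injective ι) :
    ∃ e : G × (ℕ ⊕ ℕ) ≃ W × (ℕ ⊕ ℕ),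
      (∀ w x, e (leftTranslation G _ (ι w) x) = (w * (e x).1, (e x).2)) ∧
      ∀ x, (x.1 ∈ K ∧ x.2.isLeft) ↔ (ι (e x).1 ∈ K ∧ (e x).2.isLeft) := by
  classical
  obtain ⟨R, e, c, ⟨r₀, hr₀⟩, he, hK⟩ := exists_equiv_prod_cosets K ι hι
  have : Countable R := Surjective.countable (f := fun g ↦ (e g).2)
    fun r ↦ ⟨e.symm (1, r), by simp⟩
  let T := R × (ℕ ⊕ ℕ)
  let c' : T → Prop := fun p ↦ c p.1 ∧ p.2.isLeft
  have h1 : Infinite {p : T // c' p} :=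
    Infinite.of_injective (fun n : ℕ ↦ ⟨(r₀, Sum.inl n), hr₀, rfl⟩)
      fun a b h ↦ Sum.inl.inj (Prod.mk.inj (Subtype.mk.inj h)).2
  have h2 : Infinite {p : T // ¬ c' p} :=
    Infinite.of_injective (fun n : ℕ ↦ ⟨(r₀, Sum.inr n), fun h ↦ by simpa using h.2⟩)
      fun a b h ↦ Sum.inr.inj (Prod.mk.inj (Subtype.mk.inj h)).2
  obtain ⟨e1⟩ := nonempty_equiv_of_countable (α := {p : T // c' p}) (β := ℕ)
  obtain ⟨e2⟩ := nonempty_equiv_of_countable (α := {p : T // ¬ c' p}) (β := ℕ)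
  let eT : T ≃ ℕ ⊕ ℕ := (Equiv.sumCompl c').symm.trans (e1.sumCongr e2)
  have heT : ∀ p, (eT p).isLeft ↔ c' p := by
    intro p
    by_cases h : c' p
    · simp [eT, h]
    · simp [eT, h]
  refine ⟨(e.prodCongr (Equiv.refl _)).trans
    ((Equiv.prodAssoc _ _ _).trans ((Equiv.refl W).prodCongr eT)), fun w x ↦ ?_, fun x ↦ ?_⟩
  · simp [he]
  · have := heT ((e x.1).2, x.2)
    simp only [Equiv.trans_apply, Equiv.prodCongr_apply, Prod.map, Equiv.prodAssoc_apply,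
      Equiv.coe_refl, id, this, hK x.1, c']
    tauto

/-- Given pairs of embeddings `ι i, ι' i` of a group `W` in `G` under which the subgroup `K` has the
same preimages, `G` maps to a group in which each `ι i` is conjugate to `ι' i`, and where
`K` is the set of the elements of `G` that commute with some `s` commuting with the conjugators. -/
theorem exists_conjugators {G W I : Type} [Group G] [Countable G] [Group W] (K : Subgroup G)
    (ι ι' : I → W →* G) (hι : ∀ i, Injective (ι i)) (hι' : ∀ i, Injective (ι' i))
    (hK : ∀ i w, ι i w ∈ K ↔ ι' i w ∈ K) :
    ∃ (P : Type) (_ : Group P) (j : G →* P) (r : I → P) (s : P),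
      (∀ i w, r i * j (ι i w) = j (ι' i w) * r i) ∧ (∀ i, Commute s (r i)) ∧
      ∀ g, Commute s (j g) ↔ g ∈ K := by
  classical
  choose e he heK using fun i ↦ exists_equiv_free_action K (ι i) (hι i)
  choose e' he' heK' using fun i ↦ exists_equiv_free_action K (ι' i) (hι' i)
  let X := G × (ℕ ⊕ ℕ)
  let Y : X → Prop := fun x ↦ x.1 ∈ K ∧ x.2.isLeft
  let E : Equiv.Perm X →* Equiv.Perm (X × Bool) :=
    { toFun f := f.prodCongr (Equiv.refl Bool)
      map_one' := by ext x <;> rfl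
      map_mul' f g := by ext x <;> rfl }
  have hE : ∀ f x b, E f (x, b) = (f x, b) := fun _ _ _ ↦ rfl
  let s : Equiv.Perm (X × Bool) := Involutive.toPerm (fun p ↦ (p.1, if Y p.1 then !p.2 else p.2))
    (fun p ↦ by by_cases h : Y p.1 <;> simp [h])
  have hs : ∀ x b, s (x, b) = (x, if Y x then !b else b) := fun _ _ ↦ rfl
  have hcomm : ∀ f, Commute s (E f) ↔ ∀ x, Y (f x) ↔ Y x := by
    intro f
    constructor
    · intro h x
      have := congrArg (fun g : Equiv.Perm (X × Bool) ↦ g (x, false)) h.eq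
      simp only [Equiv.Perm.mul_apply, hE, hs] at this
      by_cases h1 : Y (f x) <;> by_cases h2 : Y x <;> simp_all
    · intro h
      refine Equiv.ext fun ⟨x, b⟩ ↦ ?_
      simp only [Equiv.Perm.mul_apply, hE, hs, h x]
  let r : I → Equiv.Perm X := fun i ↦ (e i).trans (e' i).symm
  refine ⟨Equiv.Perm (X × Bool), inferInstance, E.comp (leftTranslation G _), fun i ↦ E (r i), s,
    fun i w ↦ ?_, fun i ↦ (hcomm _).2 fun x ↦ ?_,
    fun g ↦ (hcomm _).trans ⟨fun h ↦ ?_, fun h x ↦ ?_⟩⟩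
  · rw [MonoidHom.comp_apply, MonoidHom.comp_apply, ← map_mul, ← map_mul]
    congr 1
    refine Equiv.ext fun x ↦ (e' i).injective ?_
    simp only [Equiv.Perm.mul_apply, r, Equiv.trans_apply, Equiv.apply_symm_apply, he, he']
  · have h1 := heK i x
    have h2 := heK' i (r i x)
    simp only [r, Equiv.trans_apply, Equiv.apply_symm_apply, ← hK] at h2
    exact h2.trans h1.symm
  · have h1 : g * 1 ∈ K := ((h (1, Sum.inl 0)).2 ⟨K.one_mem, rfl⟩).1
    rwa [mul_one] at h1
  · exact and_congr_left' (K.mul_mem_cancel_left h)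

/-- The action of `A` on the free group over `Q × A` by translation of the generators. -/
def freeGroupTranslation (Q A : Type) [Group A] : A →* MulAut (FreeGroup (Q × A)) where
  toFun a := FreeGroup.freeGroupCongr ((Equiv.refl Q).prodCongr (Equiv.mulLeft a))
  map_one' := by
    refine MulEquiv.toMonoidHom_injective (FreeGroup.ext_hom _ _ ?_)
    rintro ⟨q, y⟩
    simp
  map_mul' a b := by
    refine MulEquiv.toMonoidHom_injective (FreeGroup.ext_hom _ _ ?_)
    rintro ⟨q, y⟩
    simp [mul_assoc]

@[simp]
theorem freeGroupTranslation_of {Q A : Type} [Group A] (a : A) (p : Q × A) :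
    freeGroupTranslation Q A a (FreeGroup.of p) = FreeGroup.of (p.1, a * p.2) := by
  simp [freeGroupTranslation, Prod.map]

/-- The semidirect product of the free group over `Q × A` by the translations. -/
abbrev TranslationGroup (Q A : Type) [Group A] :=
  FreeGroup (Q × A) ⋊[freeGroupTranslation Q A] A

/-- The embedding of the translation group over `A` in the one over `Q × A` along the
coset map `y ↦ (q, a * α y)`. -/
def cosetHom {Q A : Type} [CommGroup A] (q : Q) (a : A) (α : A →* A) :
    TranslationGroup Unit A →*
      TranslationGroup Q A :=
  SemidirectProduct.map (FreeGroup.map fun y ↦ (q, a * α y.2)) α fun b ↦ by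
    refine FreeGroup.ext_hom _ _ fun y ↦ ?_
    simp [mul_left_comm]

theorem cosetHom_injective {Q A : Type} [CommGroup A] (q : Q) (a : A) (α : A →* A)
    (hα : Injective α) : Injective (cosetHom q a α) := by
  intro u v h
  refine SemidirectProduct.ext (FreeGroup.map_injective (fun x y hxy ↦ ?_)
    (congrArg SemidirectProduct.left h)) (hα (congrArg SemidirectProduct.right h))
  simpa [Prod.ext_iff, hα.eq_iff] using hxy

open scoped Classical in
/-- The endomorphism of a free group killing the generators in `S`. -/
noncomputable def killHom {X : Type} (S : Set X) : FreeGroup X →* FreeGroup X :=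
  FreeGroup.lift fun x ↦ if x ∈ S then 1 else FreeGroup.of x

theorem killHom_map {X Y : Type} (f : X → Y) (S : Set Y) (u : FreeGroup X) :
    killHom S (FreeGroup.map f u) = FreeGroup.map f (killHom (f ⁻¹' S) u) := by
  rw [← MonoidHom.comp_apply, ← MonoidHom.comp_apply]
  congr 1
  refine FreeGroup.ext_hom _ _ fun x ↦ ?_
  by_cases h : f x ∈ S <;> simp [killHom, h]

theorem killHom_of_eq_one_iff {X : Type} (S : Set X) (x : X) :
    killHom S (FreeGroup.of x) = 1 ↔ x ∈ S := by
  by_cases h : x ∈ S <;> simp [killHom, h]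

/-- A partial map `(q, a * α y) ↦ (q', a' * α' y)` between cosets in `Q × A`. -/
structure CosetRule (Q A : Type) [CommGroup A] where
  /-- The source state. -/
  q : Q
  /-- The target state. -/
  q' : Q
  /-- The representative of the source coset. -/
  a : A
  /-- The representative of the target coset. -/
  a' : A
  /-- The parametrization of the source coset. -/
  α : A →* A
  /-- The parametrization of the target coset. -/
  α' : A →* A

theorem exists_coset_model {Q A I : Type} [CommGroup A] [Countable Q] [Countable A]
    (ρ : I → CosetRule Q A) (hα : ∀ i, Injective (ρ i).α) (hα' : ∀ i, Injective (ρ i).α')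
    (S : Set (Q × A))
    (hS : ∀ i y, ((ρ i).q, (ρ i).a * (ρ i).α y) ∈ S ↔ ((ρ i).q', (ρ i).a' * (ρ i).α' y) ∈ S) :
    ∃ (P : Type) (_ : Group P) (x : A →* P) (t : Q → P) (r : I → P) (s : P),
      (∀ i y, r i * x ((ρ i).α y) = x ((ρ i).α' y) * r i) ∧
      (∀ i, r i * (x (ρ i).a * t (ρ i).q * (x (ρ i).a)⁻¹) =
        (x (ρ i).a' * t (ρ i).q' * (x (ρ i).a')⁻¹) * r i) ∧
      (∀ i, Commute s (r i)) ∧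
      ∀ q a, Commute s (x a * t q * (x a)⁻¹) ↔ (q, a) ∈ S := by
  have : Countable (FreeGroup (Q × A)) := Quot.mk_surjective.countable
  have : Countable (TranslationGroup Q A) := SemidirectProduct.equivProd.injective.countable
  let K : Subgroup (TranslationGroup Q A) :=
    { carrier := {g | g.right = 1 ∧ killHom S g.left = 1}
      one_mem' := by simp
      mul_mem' := by
        rintro a b ⟨h1, h2⟩ ⟨h3, h4⟩
        simp [h1, h2, h3, h4]
      inv_mem' := by
        rintro a ⟨h1, h2⟩
        simp [h1, h2] }
  have hK : ∀ g : TranslationGroup Q A, g ∈ K ↔ g.right = 1 ∧ killHom S g.left = 1 :=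
    fun _ ↦ Iff.rfl
  have hmem : ∀ (q : Q) (a : A) (α : A →* A), Injective α → ∀ w, cosetHom q a α w ∈ K ↔
      w.right = 1 ∧ killHom ((fun y : Unit × A ↦ (q, a * α y.2)) ⁻¹' S) w.left = 1 := by
    intro q a α hα w
    have hinj : Injective fun y : Unit × A ↦ (q, a * α y.2) := fun x y hxy ↦ by
      simpa [Prod.ext_iff, hα.eq_iff] using hxy
    rw [hK]
    refine and_congr (map_eq_one_iff α hα) ?_
    change killHom S (FreeGroup.map _ w.left) = 1 ↔ _
    rw [killHom_map, map_eq_one_iff _ (FreeGroup.map_injective hinj)]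
  obtain ⟨P, _, j, r, s, hr, hsr, hs⟩ := exists_conjugators K
    (fun i ↦ cosetHom (ρ i).q (ρ i).a (ρ i).α) (fun i ↦ cosetHom (ρ i).q' (ρ i).a' (ρ i).α')
    (fun i ↦ cosetHom_injective _ _ _ (hα i)) (fun i ↦ cosetHom_injective _ _ _ (hα' i))
    (fun i w ↦ by
      rw [hmem _ _ _ (hα i), hmem _ _ _ (hα' i)]
      congr! 4
      ext y
      exact hS i y.2)
  have hT : ∀ q a, (SemidirectProduct.inr a * SemidirectProduct.inl (FreeGroup.of (q, 1)) *
      (SemidirectProduct.inr a)⁻¹ : TranslationGroup Q A) =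
        SemidirectProduct.inl (FreeGroup.of (q, a)) := by
    intro q a
    rw [← map_inv, ← SemidirectProduct.inl_aut]
    simp
  refine ⟨P, inferInstance, j.comp SemidirectProduct.inr,
    fun q ↦ j (SemidirectProduct.inl (FreeGroup.of (q, 1))), r, s, fun i y ↦ ?_, fun i ↦ ?_, hsr,
    fun q a ↦ ?_⟩
  · simpa [cosetHom] using hr i (SemidirectProduct.inr y)
  · have := hr i (SemidirectProduct.inl (FreeGroup.of ((), 1)))
    simp only [MonoidHom.comp_apply, ← map_inv j, ← map_mul j, hT]
    simpa [cosetHom] using this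
  · simp only [MonoidHom.comp_apply, ← map_inv j, ← map_mul j, hT, hs, hK]
    simp [killHom_of_eq_one_iff]

/-- A machine with states `Q` and integer registers `K`. In state `q` it divides the register
`key q` by `5` with remainder `r`, replaces this register by an affine function of the quotient
depending on `q` and `r`, and moves to the state `next q r`. -/
structure CounterMachine (Q K : Type) where
  /-- The register inspected by a state. -/
  key : Q → K
  /-- The next state. -/
  next : Q → ℤ → Q
  /-- The slope of the register transformation. -/
  mul : Q → ℤ → ℤ
  /-- The constant term of the register transformation. -/
  add : Q → ℤ → ℤ
  mul_ne_zero : ∀ q r, mul q r ≠ 0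

namespace CounterMachine

open scoped commutatorElement

variable {Q K : Type}

/-- The step function of a counter machine. -/
def step [DecidableEq K] (M : CounterMachine Q K) (p : Q × (K → ℤ)) : Q × (K → ℤ) :=
  (M.next p.1 (p.2 (M.key p.1) % 5), update p.2 (M.key p.1)
    (M.mul p.1 (p.2 (M.key p.1) % 5) * (p.2 (M.key p.1) / 5) +
      M.add p.1 (p.2 (M.key p.1) % 5)))

theorem step_eq [DecidableEq K] (M : CounterMachine Q K) (q : Q) (a : K → ℤ) (d : Fin 5) (n : ℤ)
    (h : a (M.key q) = d + 5 * n) :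
    M.step (q, a) = (M.next q d, update a (M.key q) (M.add q d + M.mul q d * n)) := by
  have h1 : a (M.key q) % 5 = d := by omega
  have h2 : a (M.key q) / 5 = n := by omega
  simp only [step, h1, h2, add_comm]

/-- Raising the coordinates to given powers. -/
def scaleHom (e : K → ℤ) : (K → Multiplicative ℤ) →* (K → Multiplicative ℤ) where
  toFun a k := a k ^ e k
  map_one' := by ext; simp
  map_mul' a b := by ext k; simp [mul_zpow]

theorem scaleHom_injective (e : K → ℤ) (he : ∀ k, e k ≠ 0) : Injective (scaleHom e) := by
  intro a b h
  ext k
  have := congrArg Multiplicative.toAdd (congrFun h k)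
  simpa [scaleHom, he k] using this

theorem scaleHom_mulSingle [DecidableEq K] (e : K → ℤ) (k : K) (n : Multiplicative ℤ) :
    scaleHom e (Pi.mulSingle k n) = Pi.mulSingle k (n ^ e k) := by
  ext l
  rcases eq_or_ne l k with rfl | h <;> simp [scaleHom, *]

/-- The exponents scaling the register `k` by `m`. -/
def exponents [DecidableEq K] (k : K) (m : ℤ) : K → ℤ := update 1 k m

theorem exponents_ne_zero [DecidableEq K] (k : K) (m : ℤ) (hm : m ≠ 0) (l : K) :
    exponents k m l ≠ 0 := by
  rcases eq_or_ne l k with rfl | h <;> simp [exponents, *]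

/-- The rules describing the steps of a counter machine. -/
def rule [DecidableEq K] (M : CounterMachine Q K) (i : Q × Fin 5) :
    CosetRule Q (K → Multiplicative ℤ) where
  q := i.1
  q' := M.next i.1 (i.2 : ℕ)
  a := Pi.mulSingle (M.key i.1) (Multiplicative.ofAdd ((i.2 : ℕ) : ℤ))
  a' := Pi.mulSingle (M.key i.1) (Multiplicative.ofAdd (M.add i.1 (i.2 : ℕ)))
  α := scaleHom (exponents (M.key i.1) 5)
  α' := scaleHom (exponents (M.key i.1) (M.mul i.1 (i.2 : ℕ)))

/-- The additive form of a configuration. -/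
def toConfig (p : Q × (K → Multiplicative ℤ)) : Q × (K → ℤ) := (p.1, fun k ↦ (p.2 k).toAdd)

theorem toConfig_injective : Injective (toConfig : Q × (K → Multiplicative ℤ) → Q × (K → ℤ)) :=
  fun _ _ h ↦ h

theorem step_rule [DecidableEq K] (M : CounterMachine Q K) (i : Q × Fin 5)
    (y : K → Multiplicative ℤ) :
    M.step (toConfig ((M.rule i).q, (M.rule i).a * (M.rule i).α y)) =
      toConfig ((M.rule i).q', (M.rule i).a' * (M.rule i).α' y) := by
  obtain ⟨q, d⟩ := i
  rw [toConfig, M.step_eq _ _ d (y (M.key q)).toAdd (by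
    simp [rule, scaleHom, exponents, mul_comm, add_comm])]
  refine Prod.ext rfl (funext fun l ↦ ?_)
  rcases eq_or_ne l (M.key q) with rfl | h
  · simp [rule, scaleHom, exponents, mul_comm, toConfig]
  · simp [rule, scaleHom, exponents, toConfig, h]

theorem exists_rule [DecidableEq K] (M : CounterMachine Q K) (p : Q × (K → Multiplicative ℤ)) :
    ∃ i y, p = ((M.rule i).q, (M.rule i).a * (M.rule i).α y) := by
  obtain ⟨q, a⟩ := p
  let n := (a (M.key q)).toAdd
  have hd : (((⟨(n % 5).toNat, by omega⟩ : Fin 5) : ℕ) : ℤ) = n % 5 := by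
    simp only; omega
  refine ⟨(q, ⟨(n % 5).toNat, by omega⟩), update a (M.key q) (Multiplicative.ofAdd (n / 5)),
    Prod.ext rfl (funext fun l ↦ ?_)⟩
  apply Multiplicative.toAdd.injective
  rcases eq_or_ne l (M.key q) with rfl | h
  · simp only [rule, hd, scaleHom, exponents, MonoidHom.coe_mk, OneHom.coe_mk, Pi.mul_apply,
      Pi.mulSingle_eq_same, update_self, toAdd_mul, toAdd_ofAdd, toAdd_zpow, smul_eq_mul]
    omega
  · simp [rule, scaleHom, exponents, h]

/-- The generators of the group attached to a counter machine. -/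
inductive Gen (Q K : Type) : Type
  | x (k : K)
  | t (q : Q)
  | r (i : Q × Fin 5)
  | s

instance [Finite Q] [Finite K] : Finite (Gen Q K) :=
  Finite.of_surjective (Sum.elim Gen.x (Sum.elim Gen.t (Sum.elim Gen.r fun _ : Unit ↦ Gen.s)))
    (by
      rintro (k | q | i | _)
      exacts [⟨.inl k, rfl⟩, ⟨.inr (.inl q), rfl⟩, ⟨.inr (.inr (.inl i)), rfl⟩,
        ⟨.inr (.inr (.inr ())), rfl⟩])

/-- The conjugate of the generator of the state `q` by the `n`-th power of the generator of the
register `k`. -/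
def configElement {P : Type} [Group P] (g : Gen Q K → P) (q : Q) (k : K) (n : ℤ) : P :=
  g (.x k) ^ n * g (.t q) * (g (.x k) ^ n)⁻¹

/-- The relators of the group attached to a counter machine. -/
def relators [DecidableEq K] (M : CounterMachine Q K) (q₀ : Q) (k₀ : K) (n₀ : ℤ) :
    Set (FreeGroup (Gen Q K)) :=
  (Set.range fun p : K × K ↦ ⁅FreeGroup.of (Gen.x p.1 : Gen Q K), FreeGroup.of (Gen.x p.2)⁆) ∪
  (Set.range fun p : (Q × Fin 5) × K ↦
    FreeGroup.of (Gen.r p.1) * FreeGroup.of (Gen.x p.2) ^ exponents (M.key p.1.1) 5 p.2 *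
    (FreeGroup.of (Gen.x p.2) ^ exponents (M.key p.1.1) (M.mul p.1.1 (p.1.2 : ℕ)) p.2 *
      FreeGroup.of (Gen.r p.1))⁻¹) ∪
  (Set.range fun i : Q × Fin 5 ↦
    FreeGroup.of (Gen.r i) * configElement FreeGroup.of i.1 (M.key i.1) (i.2 : ℕ) *
    (configElement FreeGroup.of (M.next i.1 (i.2 : ℕ)) (M.key i.1) (M.add i.1 (i.2 : ℕ)) *
      FreeGroup.of (Gen.r i))⁻¹) ∪
  (Set.range fun i : Q × Fin 5 ↦ ⁅FreeGroup.of (Gen.s : Gen Q K), FreeGroup.of (Gen.r i)⁆) ∪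
  {⁅FreeGroup.of (Gen.s : Gen Q K), configElement FreeGroup.of q₀ k₀ n₀⁆}

theorem finite_relators [DecidableEq K] [Finite Q] [Finite K] (M : CounterMachine Q K)
    (q₀ : Q) (k₀ : K) (n₀ : ℤ) :
    (M.relators q₀ k₀ n₀).Finite :=
  ((((Set.finite_range _).union (Set.finite_range _)).union (Set.finite_range _)).union
    (Set.finite_range _)).union (Set.finite_singleton _)

theorem map_configElement {P P' : Type} [Group P] [Group P'] (f : P →* P') (g : Gen Q K → P)
    (q : Q) (k : K) (n : ℤ) :
    f (configElement g q k n) = configElement (fun x ↦ f (g x)) q k n := by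
  simp [configElement]

/-- A homomorphism kills the relators iff the images of the generators satisfy the relations. -/
theorem forall_relators_iff [DecidableEq K] (M : CounterMachine Q K) (q₀ : Q) (k₀ : K) (n₀ : ℤ)
    {P : Type} [Group P] (f : FreeGroup (Gen Q K) →* P) (g : Gen Q K → P)
    (hg : ∀ x, f (FreeGroup.of x) = g x) :
    (∀ u ∈ M.relators q₀ k₀ n₀, f u = 1) ↔
      (∀ k l, Commute (g (.x k)) (g (.x l))) ∧
      (∀ i k, g (.r i) * g (.x k) ^ exponents (M.key i.1) 5 k =
        g (.x k) ^ exponents (M.key i.1) (M.mul i.1 (i.2 : ℕ)) k * g (.r i)) ∧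
      (∀ i, g (.r i) * configElement g i.1 (M.key i.1) (i.2 : ℕ) =
        configElement g (M.next i.1 (i.2 : ℕ)) (M.key i.1) (M.add i.1 (i.2 : ℕ)) *
          g (.r i)) ∧
      (∀ i, Commute (g .s) (g (.r i))) ∧
      Commute (g .s) (configElement g q₀ k₀ n₀) := by
  simp only [relators, Set.union_singleton, Set.forall_mem_insert, Set.mem_union,
    or_imp, forall_and, Set.forall_mem_range, map_mul, map_inv,
    map_commutatorElement, map_zpow, map_configElement, hg, mul_inv_eq_one,
    commutatorElement_eq_one_iff_commute, Prod.forall, and_assoc]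
  tauto

/-- Transport of commutation along the relations of a rule. -/
theorem commute_conj_iff {P : Type} [Group P] {s r X X' a a' t t' : P} (hs : Commute s r)
    (hX : r * X = X' * r) (ht : r * (a * t * a⁻¹) = a' * t' * a'⁻¹ * r) :
    Commute s (X * a * t * (X * a)⁻¹) ↔ Commute s (X' * a' * t' * (X' * a')⁻¹) := by
  have h1 : X = r⁻¹ * X' * r := by rw [mul_assoc, ← hX, inv_mul_cancel_left]
  have h2 : a * t * a⁻¹ = r⁻¹ * (a' * t' * a'⁻¹) * r := by
    rw [mul_assoc r⁻¹, ← ht, inv_mul_cancel_left]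
  have h3 : X * a * t * (X * a)⁻¹ = r⁻¹ * (X' * a' * t' * (X' * a')⁻¹) * r := by
    calc _ = X * (a * t * a⁻¹) * X⁻¹ := by group
      _ = _ := by rw [h2, h1]; group
  have h4 : X' * a' * t' * (X' * a')⁻¹ = r * (X * a * t * (X * a)⁻¹) * r⁻¹ := by
    rw [h3]; group
  constructor
  · intro h
    rw [h4]
    exact (hs.mul_right h).mul_right hs.inv_right
  · intro h
    rw [h3]
    exact (hs.inv_right.mul_right h).mul_right hs

/-- If the generators satisfy the relations, then `s` commutes with the elements associated to the
configurations leading to the final one. -/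
theorem commute_configElement [DecidableEq K] [Fintype K] (M : CounterMachine Q K) (q₀ : Q)
    (k₀ : K) (n₀ : ℤ)
    {P : Type} [Group P] (f : FreeGroup (Gen Q K) →* P)
    (hf : ∀ u ∈ M.relators q₀ k₀ n₀, f u = 1) (q : Q) (k : K) (n : ℤ)
    (h : ∃ m, M.step^[m] (q, Pi.single k n) = (q₀, Pi.single k₀ n₀)) :
    Commute (f (FreeGroup.of (Gen.s : Gen Q K))) (f (configElement FreeGroup.of q k n)) := by
  obtain ⟨h1, h2, h3, h4, h5⟩ := (M.forall_relators_iff q₀ k₀ n₀ f _ fun _ ↦ rfl).1 hf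
  let X : (K → Multiplicative ℤ) →* P :=
    MonoidHom.noncommPiCoprod (fun k ↦ zpowersHom P (f (FreeGroup.of (Gen.x k)))) fun k l _ a b ↦ by
      simpa using ((h1 k l).zpow_zpow _ _)
  have hX : ∀ k n, X (Pi.mulSingle k n) = f (FreeGroup.of (Gen.x k)) ^ n.toAdd := by
    intro k n
    exact (MonoidHom.noncommPiCoprod_mulSingle ..).trans rfl
  have hT : ∀ q k n, f (configElement FreeGroup.of q k n) = X (Pi.mulSingle k (.ofAdd n)) *
      f (FreeGroup.of (Gen.t q)) * (X (Pi.mulSingle k (.ofAdd n)))⁻¹ := by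
    intro q k n
    simp [hX, configElement]
  have hscale : ∀ i y, f (FreeGroup.of (Gen.r i)) * X ((M.rule i).α y) =
      X ((M.rule i).α' y) * f (FreeGroup.of (Gen.r i)) := by
    intro i y
    have : ((MulAut.conj (f (FreeGroup.of (Gen.r i)))).toMonoidHom.comp
        (X.comp (M.rule i).α)) = X.comp (M.rule i).α' := by
      refine MonoidHom.pi_ext fun k n ↦ ?_
      have := congrArg (fun u ↦ (u * (f (FreeGroup.of (Gen.r i)))⁻¹) ^ n.toAdd) (h2 i k)
      simp only [mul_inv_cancel_right, conj_zpow, ← zpow_mul] at this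
      simp [rule, scaleHom_mulSingle, hX, ← this]
    rw [← mul_inv_eq_iff_eq_mul]
    exact DFunLike.congr_fun this y
  have hmain : ∀ (m : ℕ) (p : Q × (K → Multiplicative ℤ)),
      M.step^[m] (toConfig p) = (q₀, Pi.single k₀ n₀) →
      Commute (f (FreeGroup.of (Gen.s : Gen Q K)))
        (X p.2 * f (FreeGroup.of (Gen.t p.1)) * (X p.2)⁻¹) := by
    intro m
    induction m with
    | zero =>
      intro p hp
      have : p = (q₀, Pi.mulSingle k₀ (.ofAdd n₀)) := toConfig_injective hp
      subst this
      rw [← map_configElement, hT] at h5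
      exact h5
    | succ m ih =>
      intro p hp
      obtain ⟨i, y, rfl⟩ := M.exists_rule p
      rw [iterate_succ_apply, step_rule] at hp
      have h6 := ih _ hp
      have h7 := h3 i
      rw [← map_configElement, ← map_configElement, hT, hT] at h7
      have h8 := hscale i y
      rw [mul_comm (M.rule i).a', map_mul] at h6
      rw [mul_comm (M.rule i).a, map_mul]
      exact (commute_conj_iff (h4 i) h8 h7).2 h6
  obtain ⟨m, hm⟩ := h
  rw [hT]
  exact hmain m (q, Pi.mulSingle k (.ofAdd n)) hm

theorem exists_reaches_of_commute [DecidableEq K] [Finite Q] [Finite K] (M : CounterMachine Q K)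
    (q₀ : Q) (k₀ : K) (n₀ : ℤ)
    (h₀ : M.step (q₀, Pi.single k₀ n₀) = (q₀, Pi.single k₀ n₀)) :
    ∃ (P : Type) (_ : Group P) (f : FreeGroup (Gen Q K) →* P),
      (∀ u ∈ M.relators q₀ k₀ n₀, f u = 1) ∧
      ∀ q k n, Commute (f (FreeGroup.of (Gen.s : Gen Q K))) (f (configElement FreeGroup.of q k n)) →
        ∃ m, M.step^[m] (q, Pi.single k n) = (q₀, Pi.single k₀ n₀) := by
  obtain ⟨P, _, x, t, r, s, hx, ht, hsr, hs⟩ := exists_coset_model M.rule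
    (fun i ↦ scaleHom_injective _ (exponents_ne_zero _ _ (by norm_num)))
    (fun i ↦ scaleHom_injective _ (exponents_ne_zero _ _ (M.mul_ne_zero _ _)))
    {p | ∃ m, M.step^[m] (toConfig p) = (q₀, Pi.single k₀ n₀)} (fun i y ↦ by
      simp only [Set.mem_ofPred_eq, ← step_rule]
      constructor
      · rintro ⟨m, hm⟩
        exact ⟨m, by rw [← iterate_succ_apply, iterate_succ_apply', hm, h₀]⟩
      · rintro ⟨m, hm⟩
        exact ⟨m + 1, hm⟩)
  let g : Gen Q K → P := fun
    | .x k => x (Pi.mulSingle k (.ofAdd 1))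
    | .t q => t q
    | .r i => r i
    | .s => s
  have hpow : ∀ k n, g (.x k) ^ n = x (Pi.mulSingle k (.ofAdd n)) := by
    intro k n
    change x _ ^ n = _
    rw [← map_zpow, ← Pi.mulSingle_zpow, ← ofAdd_zsmul]
    simp
  have hT : ∀ q k n, configElement g q k n =
      x (Pi.mulSingle k (.ofAdd n)) * t q * (x (Pi.mulSingle k (.ofAdd n)))⁻¹ := by
    intro q k n
    simp only [configElement, hpow]
    rfl
  refine ⟨P, inferInstance, FreeGroup.lift g, (M.forall_relators_iff q₀ k₀ n₀ _ g (by simp)).2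
    ⟨fun k l ↦ ?_, fun i k ↦ ?_, fun i ↦ ?_, hsr, ?_⟩, fun q k n h ↦ ?_⟩
  · exact (Commute.all _ _).map x
  · have := hx i (Pi.mulSingle k (.ofAdd 1))
    simp only [rule, scaleHom_mulSingle, Pi.mulSingle_zpow, map_zpow] at this
    exact this
  · rw [hT, hT]
    exact ht i
  · rw [hT]
    exact (hs _ _).2 ⟨0, rfl⟩
  · rw [map_configElement] at h
    simp only [FreeGroup.lift_apply_of, hT] at h
    exact (hs _ _).1 h

theorem commutator_mem_normalClosure_iff [DecidableEq K] [Finite Q] [Finite K]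
    (M : CounterMachine Q K) (q₀ : Q) (k₀ : K) (n₀ : ℤ)
    (h₀ : M.step (q₀, Pi.single k₀ n₀) = (q₀, Pi.single k₀ n₀))
    (q : Q) (k : K) (n : ℤ) :
    ⁅FreeGroup.of (Gen.s : Gen Q K), configElement FreeGroup.of q k n⁆ ∈
      Subgroup.normalClosure (M.relators q₀ k₀ n₀) ↔
    ∃ m, M.step^[m] (q, Pi.single k n) = (q₀, Pi.single k₀ n₀) := by
  have := Fintype.ofFinite K
  constructor
  · obtain ⟨P, _, f, hf, h⟩ := M.exists_reaches_of_commute q₀ k₀ n₀ h₀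
    intro h1
    apply h
    rw [← commutatorElement_eq_one_iff_commute, ← map_commutatorElement]
    exact Subgroup.normalClosure_le_normal (N := f.ker) hf h1
  · intro h
    have := M.commute_configElement q₀ k₀ n₀
      (QuotientGroup.mk' (Subgroup.normalClosure (M.relators q₀ k₀ n₀)))
      (fun u hu ↦ (QuotientGroup.eq_one_iff u).2 (Subgroup.subset_normalClosure hu)) q k n h
    rw [← commutatorElement_eq_one_iff_commute, ← map_commutatorElement] at this
    exact (QuotientGroup.eq_one_iff _).1 this

end CounterMachine

/-- A free group on countably many generators embeds in a free group on two generators. -/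
theorem exists_injective_freeGroupHom {X Y : Type} [Countable X] {a b : Y} (hab : a ≠ b) :
    ∃ φ : FreeGroup X →* FreeGroup Y, Injective φ := by
  classical
  obtain ⟨e, he⟩ := exists_injective_nat X
  let φ : FreeGroup X →* FreeGroup Y := FreeGroup.lift fun x ↦
    .of a ^ (e x : ℤ) * .of b * (.of a ^ (e x : ℤ))⁻¹
  let ψ : FreeGroup Y →* TranslationGroup Unit (Multiplicative ℤ) := FreeGroup.lift fun y ↦
    if y = a then SemidirectProduct.inr (.ofAdd 1)
    else if y = b then SemidirectProduct.inl (.of ((), 1)) else 1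
  have h : ψ.comp φ = SemidirectProduct.inl.comp
      (FreeGroup.map fun x ↦ ((), Multiplicative.ofAdd (e x : ℤ))) := by
    refine FreeGroup.ext_hom _ _ fun x ↦ ?_
    have h1 : (Multiplicative.ofAdd (1 : ℤ)) ^ (e x : ℤ) = .ofAdd (e x : ℤ) := by
      rw [← ofAdd_zsmul]
      simp
    simp only [φ, ψ, MonoidHom.comp_apply, FreeGroup.lift_apply_of, FreeGroup.map.of, map_mul,
      map_inv, map_zpow, if_true, hab.symm, if_false]
    rw [← map_zpow, h1, ← map_inv, ← SemidirectProduct.inl_aut]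
    simp
  refine ⟨φ, Injective.of_comp (f := ψ) ?_⟩
  rw [← MonoidHom.coe_comp, h]
  refine SemidirectProduct.inl_injective.comp (FreeGroup.map_injective fun x y hxy ↦ he ?_)
  simpa using hxy

/-- The Mihailova subgroup attached to a finite presentation, transported along an injective
homomorphism. -/
theorem exists_fg_subgroup_prod {X F : Type} [Finite X] [Group F] (φ : FreeGroup X →* F)
    (hφ : Injective φ) {R : Set (FreeGroup X)} (hR : R.Finite) :
    ∃ H : Subgroup (F × F), H.FG ∧
      ∀ w, (φ w, 1) ∈ H ↔ w ∈ Subgroup.normalClosure R := by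
  let T : Set (F × F) := Set.range (fun x ↦ (φ (.of x), φ (.of x))) ∪ (fun r ↦ (φ r, 1)) '' R
  refine ⟨Subgroup.closure T, (Subgroup.fg_iff _).2
    ⟨T, rfl, (Set.finite_range _).union (hR.image _)⟩, fun w ↦ ⟨fun h ↦ ?_, fun h ↦ ?_⟩⟩
  · let mk := QuotientGroup.mk' (Subgroup.normalClosure R)
    have hle : Subgroup.closure T ≤ (MonoidHom.eqLocus (mk.comp (MonoidHom.fst _ _))
        (mk.comp (MonoidHom.snd _ _))).map (φ.prodMap φ) := by
      rw [Subgroup.closure_le]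
      rintro _ (⟨x, rfl⟩ | ⟨r, hr, rfl⟩)
      · exact ⟨(.of x, .of x), rfl, rfl⟩
      · refine ⟨(r, 1), ?_, by simp⟩
        exact (QuotientGroup.eq_one_iff r).2 (Subgroup.subset_normalClosure hr)
    obtain ⟨⟨u, v⟩, huv, h1⟩ := hle h
    have hu : u = w := hφ (congrArg Prod.fst h1)
    have hv : v = 1 := hφ ((congrArg Prod.snd h1).trans (map_one φ).symm)
    subst hu hv
    exact (QuotientGroup.eq_one_iff u).1 huv
  · have hdiag : ∀ u, (φ u, φ u) ∈ Subgroup.closure T := by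
      have : (Subgroup.closure T).comap (φ.prod φ) = ⊤ := by
        rw [eq_top_iff, ← FreeGroup.closure_range_of, Subgroup.closure_le]
        rintro _ ⟨x, rfl⟩
        exact Subgroup.subset_closure (.inl ⟨x, rfl⟩)
      intro u
      exact (this ▸ Subgroup.mem_top u : u ∈ (Subgroup.closure T).comap (φ.prod φ))
    let P : Subgroup (FreeGroup X) := (Subgroup.closure T).comap (φ.prod 1)
    have hP : P.Normal := ⟨fun v hv u ↦ by
      have := mul_mem (mul_mem (hdiag u) hv) (inv_mem (hdiag u))
      simpa [P] using this⟩
    have hle : Subgroup.normalClosure R ≤ P := Subgroup.normalClosure_le_normal fun r hr ↦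
      Subgroup.subset_closure (.inr ⟨r, hr, rfl⟩)
    exact hle h

namespace CounterMachine

/-- The restriction of a counter machine to a closed set of states. -/
def restrict {Q K : Type} (M : CounterMachine Q K) (T : Set Q)
    (hT : ∀ q ∈ T, ∀ r, M.next q r ∈ T) : CounterMachine T K where
  key q := M.key q
  next q r := ⟨M.next q r, hT q q.2 r⟩
  mul q := M.mul q
  add q := M.add q
  mul_ne_zero q := M.mul_ne_zero q

theorem restrict_step_iterate {Q K : Type} [DecidableEq K] (M : CounterMachine Q K) (T : Set Q)
    (hT : ∀ q ∈ T, ∀ r, M.next q r ∈ T) (m : ℕ) (p p' : T × (K → ℤ)) :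
    (M.restrict T hT).step^[m] p = p' ↔ M.step^[m] (p.1, p.2) = (↑p'.1, p'.2) := by
  have h : Semiconj (Prod.map Subtype.val id) (M.restrict T hT).step M.step := fun _ ↦ rfl
  have h1 : Injective (Prod.map (Subtype.val : T → Q) (id : (K → ℤ) → K → ℤ)) :=
    Subtype.val_injective.prodMap injective_id
  rw [← h1.eq_iff, (h.iterate_right m).eq]
  rfl

end CounterMachine

namespace StackSimulation

open Turing PartrecToTM2

/-- The nonzero base-5 digit representing a stack symbol. -/
def digit : Γ' → Fin 5
  | .consₗ => 1
  | .cons => 2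
  | .bit0 => 3
  | .bit1 => 4

/-- The stack symbol represented by a digit. -/
def symbol (r : ℤ) : Option Γ' :=
  if r = 1 then some .consₗ else if r = 2 then some .cons else if r = 3 then some .bit0 else
    if r = 4 then some .bit1 else none

/-- The base-5 encoding of a stack. -/
def encode : List Γ' → ℕ
  | [] => 0
  | g :: l => digit g + 5 * encode l

/-- The last digit of the encoding of a stack. -/
def headDigit (l : List Γ') : Fin 5 := l.head?.elim 0 digit

theorem encode_eq (l : List Γ') : encode l = headDigit l + 5 * encode l.tail := by
  cases l <;> rfl

theorem symbol_headDigit (l : List Γ') : symbol (headDigit l : ℕ) = l.head? := by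
  rcases l with - | ⟨(_ | _ | _ | _), l⟩ <;> rfl

/-- The statements of the machine evaluating partial recursive functions. -/
abbrev Statement := TM2.Stmt (fun _ : K' ↦ Γ') Λ' (Option Γ')

/-- The counter machine simulating the stack machine that evaluates partial recursive functions. -/
def machine : CounterMachine (Statement × Option Γ') K' where
  key p := match p.1 with
    | .push k _ _ => k
    | .peek k _ _ => k
    | .pop k _ _ => k
    | _ => .main
  next p r := match p.1 with
    | .push _ _ q => (q, p.2)
    | .peek _ f q => (q, f p.2 (symbol r))
    | .pop _ f q => (q, f p.2 (symbol r))
    | .load f q => (q, f p.2)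
    | .branch f q₁ q₂ => (cond (f p.2) q₁ q₂, p.2)
    | .goto f => (tr (f p.2), p.2)
    | .halt => (.halt, p.2)
  mul p _ := match p.1 with
    | .push _ _ _ => 25
    | .pop _ _ _ => 1
    | _ => 5
  add p r := match p.1 with
    | .push _ f _ => (digit (f p.2) : ℕ) + 5 * r
    | .pop _ _ _ => 0
    | _ => r
  mul_ne_zero p r := by
    split <;> norm_num

/-- The configuration of the counter machine about to execute a statement. -/
def config (q : Statement) (v : Option Γ') (S : K' → List Γ') :
    (Statement × Option Γ') × (K' → ℤ) :=
  ((q, v), fun k ↦ encode (S k))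

theorem step_config (q : Statement) (v : Option Γ') (S : K' → List Γ') (k : K') (l : List Γ')
    (hk : machine.key (q, v) = k)
    (hl : (encode l : ℤ) = machine.add (q, v) (headDigit (S k) : ℕ) +
      machine.mul (q, v) (headDigit (S k) : ℕ) * encode (S k).tail) :
    machine.step (config q v S) =
      config (machine.next (q, v) (headDigit (S k) : ℕ)).1
        (machine.next (q, v) (headDigit (S k) : ℕ)).2 (update S k l) := by
  subst hk
  rw [config, machine.step_eq _ _ (headDigit (S (machine.key (q, v))))
    (encode (S (machine.key (q, v))).tail) (by
      exact_mod_cast encode_eq (S (machine.key (q, v)))), ← hl]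
  refine Prod.ext rfl (funext fun j ↦ ?_)
  rcases eq_or_ne j (machine.key (q, v)) with rfl | h
  · simp [config]
  · simp [config, h]

theorem step_config_self (q : Statement) (v : Option Γ') (S : K' → List Γ') (k : K')
    (hk : machine.key (q, v) = k)
    (hadd : ∀ r, machine.add (q, v) r = r) (hmul : ∀ r, machine.mul (q, v) r = 5) :
    machine.step (config q v S) =
      config (machine.next (q, v) (headDigit (S k) : ℕ)).1
        (machine.next (q, v) (headDigit (S k) : ℕ)).2 S := by
  rw [step_config q v S k (S k) hk (by rw [hadd, hmul]; exact_mod_cast encode_eq (S k)),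
    update_eq_self]

/-- The counter machine configuration of a stack machine configuration. -/
def configOf (c : Cfg') : (Statement × Option Γ') × (K' → ℤ) :=
  config (c.l.elim .halt tr) c.var c.stk

theorem step_halt (v : Option Γ') (S : K' → List Γ') :
    machine.step (config .halt v S) = config .halt v S :=
  step_config_self .halt v S _ rfl (fun _ ↦ rfl) (fun _ ↦ rfl)

theorem exists_iterate_stepAux (q : Statement) (v : Option Γ') (S : K' → List Γ') :
    ∃ n, machine.step^[n + 1] (config q v S) = configOf (TM2.stepAux q v S) := by
  induction q generalizing v S with
  | push k f q ih =>
    obtain ⟨n, hn⟩ := ih v (update S k (f v :: S k))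
    refine ⟨n + 1, ?_⟩
    rw [iterate_succ_apply, step_config _ v S k (f v :: S k) rfl]
    · exact hn
    · have := encode_eq (S k)
      simp only [machine, encode]
      push_cast
      omega
  | peek k f q ih =>
    obtain ⟨n, hn⟩ := ih (f v (S k).head?) S
    refine ⟨n + 1, ?_⟩
    rw [iterate_succ_apply, step_config_self _ v S k rfl (fun _ ↦ rfl) (fun _ ↦ rfl)]
    simp only [machine, symbol_headDigit]
    exact hn
  | pop k f q ih =>
    obtain ⟨n, hn⟩ := ih (f v (S k).head?) (update S k (S k).tail)
    refine ⟨n + 1, ?_⟩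
    rw [iterate_succ_apply, step_config _ v S k (S k).tail rfl (by simp [machine])]
    simp only [machine, symbol_headDigit]
    exact hn
  | load f q ih =>
    obtain ⟨n, hn⟩ := ih (f v) S
    refine ⟨n + 1, ?_⟩
    rw [iterate_succ_apply, step_config_self _ v S _ rfl (fun _ ↦ rfl) (fun _ ↦ rfl)]
    exact hn
  | branch f q₁ q₂ ih₁ ih₂ =>
    have : ∃ n, machine.step^[n + 1] (config (cond (f v) q₁ q₂) v S) =
        configOf (TM2.stepAux (.branch f q₁ q₂) v S) := by
      cases h : f v
      · simpa [h] using ih₂ v S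
      · simpa [h] using ih₁ v S
    obtain ⟨n, hn⟩ := this
    refine ⟨n + 1, ?_⟩
    rw [iterate_succ_apply, step_config_self _ v S _ rfl (fun _ ↦ rfl) (fun _ ↦ rfl)]
    exact hn
  | goto f => exact ⟨0, step_config_self _ v S _ rfl (fun _ ↦ rfl) (fun _ ↦ rfl)⟩
  | halt => exact ⟨0, step_halt v S⟩

theorem exists_iterate_of_reaches {c c' : Cfg'}
    (h : StateTransition.Reaches (TM2.step tr) c c') :
    ∃ n, machine.step^[n] (configOf c) = configOf c' := by
  induction h with
  | refl => exact ⟨0, rfl⟩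
  | @tail c₁ c₂ _ h ih =>
    obtain ⟨n, hn⟩ := ih
    obtain ⟨_ | l, v, S⟩ := c₁
    · cases h
    · obtain ⟨m, hm⟩ := exists_iterate_stepAux (tr l) v S
      cases h
      exact ⟨m + 1 + n, by rw [iterate_add_apply, hn]; exact hm⟩

theorem eval_dom_of_iterate (n : ℕ) (c : Cfg') (v : Option Γ') (S : K' → List Γ')
    (h : machine.step^[n] (configOf c) = config .halt v S) :
    (StateTransition.eval (TM2.step tr) c).Dom := by
  have hnone : ∀ v S, (StateTransition.eval (TM2.step tr) (⟨none, v, S⟩ : Cfg')).Dom :=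
    fun v S ↦ Part.dom_iff_mem.2 ⟨_, StateTransition.mem_eval.2 ⟨.refl, rfl⟩⟩
  induction n using Nat.strong_induction_on generalizing c with
  | _ n ih =>
    obtain ⟨_ | l, w, U⟩ := c
    · exact hnone w U
    have hstep : StateTransition.eval (TM2.step tr) (⟨some l, w, U⟩ : Cfg') =
        StateTransition.eval (TM2.step tr) (TM2.stepAux (tr l) w U) :=
      StateTransition.reaches_eval (.single rfl)
    rw [hstep]
    by_cases hl : tr l = TM2.Stmt.halt
    · rw [hl]
      exact hnone w U
    obtain ⟨m, hm⟩ := exists_iterate_stepAux (tr l) w U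
    have hn : n ≠ 0 := by
      rintro rfl
      exact hl (congrArg (fun p ↦ p.1.1) h)
    rcases le_or_gt (m + 1) n with hmn | hmn
    · refine ih (n - (m + 1)) (by omega) _ ?_
      rw [← hm, ← iterate_add_apply, Nat.sub_add_cancel hmn]
      exact h
    · refine ih 0 (by omega) _ ?_
      rw [← hm, ← Nat.sub_add_cancel hmn.le, iterate_add_apply]
      refine (congrArg _ h).trans (iterate_fixed (step_halt v S) _)

theorem config_elim (q : Statement) (v : Option Γ') (l : List Γ') :
    config q v (K'.elim l [] [] []) = ((q, v), Pi.single K'.main (encode l : ℤ)) := by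
  refine Prod.ext rfl (funext fun k ↦ ?_)
  cases k <;> rfl

theorem exists_iterate_iff_eval_dom (c : ToPartrec.Code) (n : ℕ)
    (hc : ∀ x ∈ c.eval [n], x = [0]) :
    (∃ m, machine.step^[m] ((tr (trNormal c .halt), none),
      Pi.single K'.main (encode (trList [n]) : ℤ)) =
        ((.halt, none), Pi.single K'.main (encode (trList [0]) : ℤ))) ↔ (c.eval [n]).Dom := by
  have heval := tr_eval c [n]
  rw [← config_elim (tr (trNormal c .halt)), ← config_elim .halt]
  constructor
  · rintro ⟨m, hm⟩
    have := eval_dom_of_iterate m (PartrecToTM2.init c [n]) _ _ hm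
    rw [heval] at this
    exact this
  · intro h
    obtain ⟨x, hx⟩ := Part.dom_iff_mem.1 h
    have hmem : PartrecToTM2.halt x ∈ StateTransition.eval (TM2.step tr) (init c [n]) := by
      rw [heval]
      exact (Part.mem_map_iff _).2 ⟨x, hx, rfl⟩
    rw [hc x hx] at hmem
    exact exists_iterate_of_reaches (StateTransition.mem_eval.1 hmem).1

/-- The states of the counter machine needed for the evaluation of a code. -/
def states (c : ToPartrec.Code) : Set (Statement × Option Γ') :=
  {p | some p.1 ∈ TM2.stmts tr (codeSupp c .halt) ∨ p.1 = .halt}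

theorem finite_states (c : ToPartrec.Code) : (states c).Finite := by
  have h : (((fun q : Statement ↦ some q) ⁻¹' ↑(TM2.stmts tr (codeSupp c .halt))) ∪
      {TM2.Stmt.halt} : Set Statement).Finite :=
    ((Finset.finite_toSet _).preimage (Option.some_injective _).injOn).union
      (Set.finite_singleton _)
  refine (h.prod (Set.finite_univ (α := Option Γ'))).subset fun p hp ↦ ⟨?_, trivial⟩
  exact hp

theorem tr_mem_stmts {s : Finset Λ'} {l : Λ'} (hl : l ∈ s) : some (tr l) ∈ TM2.stmts tr s := by
  classical
  refine Finset.some_mem_insertNone.2 ?_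
  exact Finset.mem_biUnion.2 ⟨l, hl, TM2.stmts₁_self⟩

theorem next_mem_states (c : ToPartrec.Code) (p : Statement × Option Γ') (hp : p ∈ states c)
    (r : ℤ) : machine.next p r ∈ states c := by
  obtain ⟨q, v⟩ := p
  rcases hp with hp | hp
  swap
  · change q = _ at hp
    subst hp
    exact .inr rfl
  change some q ∈ _ at hp
  cases q with
  | push k f q => exact .inl (TM2.stmts_trans (by simp [TM2.stmts₁, TM2.stmts₁_self, machine]) hp)
  | peek k f q => exact .inl (TM2.stmts_trans (by simp [TM2.stmts₁, TM2.stmts₁_self, machine]) hp)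
  | pop k f q => exact .inl (TM2.stmts_trans (by simp [TM2.stmts₁, TM2.stmts₁_self, machine]) hp)
  | load f q => exact .inl (TM2.stmts_trans (by simp [TM2.stmts₁, TM2.stmts₁_self, machine]) hp)
  | branch f q₁ q₂ =>
    refine .inl (TM2.stmts_trans ?_ hp)
    cases h : f v <;> simp [TM2.stmts₁, TM2.stmts₁_self, machine, h]
  | goto f =>
    have := @TM2.stmts_supportsStmt _ _ _ _ ⟨trNormal c .halt⟩ _ _ _ (tr_supports c .halt) hp
    exact .inl (tr_mem_stmts (this v))
  | halt => exact .inr rfl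

theorem tr_trNormal_mem_states (c : ToPartrec.Code) (v : Option Γ') :
    (tr (trNormal c .halt), v) ∈ states c :=
  .inl (tr_mem_stmts (tr_supports c .halt).1)

end StackSimulation

namespace StackSimulation

open Turing PartrecToTM2

/-- The encoding of the stack holding a single natural number. -/
def inputCode : ℕ → ℕ
  | 0 => 2
  | n + 1 => 3 + (n + 1) % 2 + 5 * inputCode ((n + 1) / 2)
decreasing_by omega

theorem inputCode_of_pos {n : ℕ} (hn : 0 < n) :
    inputCode n = 3 + n % 2 + 5 * inputCode (n / 2) := by
  obtain ⟨m, rfl⟩ := Nat.exists_eq_succ_of_ne_zero hn.ne'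
  rw [Nat.succ_eq_add_one, inputCode]

theorem encode_trPosNum (p : PosNum) : encode (trPosNum p ++ [.cons]) = inputCode p := by
  induction p with
  | one =>
    rw [inputCode_of_pos (by simp)]
    simp [trPosNum, encode, inputCode, digit]
  | bit0 p ih =>
    have h := p.cast_pos (α := ℕ)
    rw [inputCode_of_pos (by rw [PosNum.cast_bit0]; omega), PosNum.cast_bit0, trPosNum,
      List.cons_append, encode, ih]
    have h1 : ((p : ℕ) + p) / 2 = p := by omega
    have h2 : ((p : ℕ) + p) % 2 = 0 := by omega
    rw [h1, h2]
    rfl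
  | bit1 p ih =>
    have h := p.cast_pos (α := ℕ)
    rw [inputCode_of_pos (by rw [PosNum.cast_bit1]; omega), PosNum.cast_bit1, trPosNum,
      List.cons_append, encode, ih]
    have h1 : ((p : ℕ) + p + 1) / 2 = p := by omega
    have h2 : ((p : ℕ) + p + 1) % 2 = 1 := by omega
    rw [h1, h2]
    rfl

theorem encode_trList (n : ℕ) : encode (trList [n]) = inputCode n := by
  have h : ∀ m : Num, encode (trNum m ++ [.cons]) = inputCode m := by
    rintro (_ | p)
    · simp [trNum, encode, digit, inputCode]
    · exact encode_trPosNum p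
  have := h n
  rwa [Num.to_of_nat] at this

theorem primrec_inputCode : Primrec inputCode := by
  have hg : Primrec₂ fun (_ : Unit) (l : List ℕ) ↦ some
      (if l.length = 0 then 2 else 3 + l.length % 2 + 5 * l.getD (l.length / 2) 0) := by
    have hl : Primrec fun p : Unit × List ℕ ↦ p.2.length := Primrec.list_length.comp Primrec.snd
    refine Primrec.option_some.comp (Primrec.ite (Primrec.eq.comp hl (Primrec.const 0))
      (Primrec.const 2) (Primrec.nat_add.comp (Primrec.nat_add.comp (Primrec.const 3)
        (Primrec.nat_mod.comp hl (Primrec.const 2)))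
        (Primrec.nat_mul.comp (Primrec.const 5) ((Primrec.list_getD 0).comp Primrec.snd
          (Primrec.nat_div.comp hl (Primrec.const 2))))))
  have := Primrec.nat_strong_rec (fun _ : Unit ↦ inputCode) hg fun _ n ↦ by
    rcases Nat.eq_zero_or_pos n with rfl | hn
    · simp [inputCode]
    · have h : n / 2 < n := by omega
      rw [inputCode_of_pos hn]
      simp [hn.ne', h]
  exact this.comp (Primrec.const ()) Primrec.id

/-- A code whose domain of definition is undecidable and which only outputs zero. -/
theorem exists_code_undecidable : ∃ c : ToPartrec.Code,
    (∀ n, ∀ x ∈ c.eval [n], x = [0]) ∧ ¬ ComputablePred fun n ↦ (c.eval [n]).Dom := by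
  let h : ℕ →. ℕ := fun n ↦ ((Denumerable.ofNat Nat.Partrec.Code n).eval 0).map fun _ ↦ 0
  have hh : Partrec h :=
    (Nat.Partrec.Code.eval_part.comp (Computable.ofNat _) (Computable.const 0)).map
      (Computable.const 0).to₂
  obtain ⟨c, hc⟩ := ToPartrec.Code.exists_code (Nat.Partrec'.part_iff₁.2 hh)
  have hc' : ∀ n, c.eval [n] = pure <$> h n := fun n ↦ hc (n ::ᵥ .nil)
  refine ⟨c, fun n x hx ↦ ?_, fun H ↦ ComputablePred.halting_problem 0 ?_⟩
  · rw [hc'] at hx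
    obtain ⟨y, hy, rfl⟩ := (Part.mem_map_iff _).1 hx
    obtain ⟨_, _, rfl⟩ := (Part.mem_map_iff _).1 hy
    rfl
  · obtain ⟨f, hf, hfH⟩ := ComputablePred.computable_iff.1 H
    refine ComputablePred.computable_iff.2
      ⟨fun c ↦ f (Encodable.encode c), hf.comp Computable.encode, funext fun d ↦ ?_⟩
    rw [← congrFun hfH (Encodable.encode d), hc']
    simp [h]

end StackSimulation

/-- A sequence of elements of a free group is computable if it is represented by a computable
sequence of words. -/
def IsComputableSequence {Y : Type} [Primcodable Y] (u : ℕ → FreeGroup Y) : Prop :=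
  ∃ w : ℕ → List (Y × Bool), Computable w ∧ ∀ m, FreeGroup.mk (w m) = u m

namespace IsComputableSequence

variable {Y : Type} [Primcodable Y]

theorem const (g : FreeGroup Y) : IsComputableSequence fun _ ↦ g := by
  induction g using Quot.inductionOn with
  | _ l => exact ⟨fun _ ↦ l, Computable.const l, fun _ ↦ rfl⟩

theorem mul {u v : ℕ → FreeGroup Y} (hu : IsComputableSequence u) (hv : IsComputableSequence v) :
    IsComputableSequence fun m ↦ u m * v m := by
  obtain ⟨w, hw, hwu⟩ := hu
  obtain ⟨w', hw', hwv⟩ := hv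
  refine ⟨fun m ↦ w m ++ w' m, Computable.list_append.comp hw hw', fun m ↦ ?_⟩
  beta_reduce
  rw [← hwu, ← hwv, FreeGroup.mul_mk]

theorem pow (g : FreeGroup Y) {N : ℕ → ℕ} (hN : Computable N) :
    IsComputableSequence fun m ↦ g ^ N m := by
  obtain ⟨l, rfl⟩ : ∃ l, FreeGroup.mk l = g := Quot.exists_rep g
  have h (k : ℕ) :
      FreeGroup.mk (Nat.rec [] (fun _ L ↦ L ++ l) k : List (Y × Bool)) = FreeGroup.mk l ^ k := by
    induction k with
    | zero => rfl
    | succ k ih =>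
      rw [pow_succ, ← ih]
      exact FreeGroup.mul_mk.symm
  exact ⟨fun m ↦ Nat.rec [] (fun _ L ↦ L ++ l) (N m), Computable.nat_rec hN
    (Computable.const []) (Computable.list_append.comp
      (Computable.snd.comp Computable.snd) (Computable.const l)).to₂, fun m ↦ h (N m)⟩

end IsComputableSequence

section Mihailova

open Turing PartrecToTM2 StackSimulation
open scoped commutatorElement

theorem isComputableSequence_commutator_configElement {Q K Y : Type} [Primcodable Y]
    (φ : FreeGroup (CounterMachine.Gen Q K) →* FreeGroup Y) (q : Q) (k : K) {N : ℕ → ℕ}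
    (hN : Computable N) : IsComputableSequence fun m ↦
      φ ⁅FreeGroup.of (CounterMachine.Gen.s : CounterMachine.Gen Q K),
        CounterMachine.configElement FreeGroup.of q k (N m)⁆ := by
  have h (t : FreeGroup Y) (x : FreeGroup Y) :
      IsComputableSequence fun m ↦ x ^ N m * t * x⁻¹ ^ N m :=
    ((IsComputableSequence.pow x hN).mul (.const t)).mul (.pow x⁻¹ hN)
  let X : FreeGroup Y := φ (FreeGroup.of (.x k))
  let T : FreeGroup Y := φ (FreeGroup.of (.t q))
  let S : FreeGroup Y := φ (FreeGroup.of .s)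
  have := (((IsComputableSequence.const S).mul (h T X)).mul (.const S⁻¹)).mul (h T⁻¹ X)
  convert this using 2 with m
  simp only [commutatorElement_def, CounterMachine.configElement, map_mul, map_inv, map_pow,
    zpow_natCast, inv_pow, X, T, S]
  group

instance : Finite K' :=
  Finite.of_injective (fun k : K' ↦ (k.rec 0 1 2 3 : Fin 4)) (by
    rintro (_ | _ | _ | _) (_ | _ | _ | _) h <;> simp_all)

/-- There is a finitely presented group together with a computable sequence of words for which
it is undecidable whether they represent the identity. -/
theorem exists_undecidable_normalClosure {Y : Type} [Primcodable Y] {a b : Y} (hab : a ≠ b) :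
    ∃ (X : Type) (_ : Finite X) (φ : FreeGroup X →* FreeGroup Y) (R : Set (FreeGroup X))
      (u : ℕ → FreeGroup X), Injective φ ∧ R.Finite ∧ IsComputableSequence (fun m ↦ φ (u m)) ∧
      ¬ ComputablePred fun m ↦ u m ∈ Subgroup.normalClosure R := by
  obtain ⟨c, hc, hdom⟩ := exists_code_undecidable
  have : Finite (states c) := (finite_states c).to_subtype
  let M := machine.restrict (states c) (next_mem_states c)
  let q₀ : states c := ⟨(.halt, none), .inr rfl⟩
  let q : states c := ⟨(tr (trNormal c .halt), none), tr_trNormal_mem_states c none⟩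
  obtain ⟨φ, hφ⟩ := exists_injective_freeGroupHom (X := CounterMachine.Gen (states c) K') hab
  have h₀ : M.step (q₀, Pi.single K'.main (encode (trList [0]) : ℤ)) =
      (q₀, Pi.single K'.main (encode (trList [0]) : ℤ)) := by
    refine (CounterMachine.restrict_step_iterate machine _ (next_mem_states c) 1 _ _).2 ?_
    have := step_halt none (K'.elim (trList [0]) [] [] [])
    rwa [config_elim] at this
  refine ⟨_, inferInstance, φ, M.relators q₀ K'.main (encode (trList [0])),
    fun m ↦ ⁅FreeGroup.of CounterMachine.Gen.s,
      CounterMachine.configElement FreeGroup.of q K'.main (inputCode m)⁆, hφ,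
    M.finite_relators _ _ _,
    isComputableSequence_commutator_configElement φ q K'.main primrec_inputCode.to_comp, ?_⟩
  convert hdom using 3 with m
  rw [M.commutator_mem_normalClosure_iff q₀ K'.main _ h₀, ← exists_iterate_iff_eval_dom c m (hc m),
    ← encode_trList m]
  exact exists_congr fun i ↦
    CounterMachine.restrict_step_iterate machine _ (next_mem_states c) i _ _

end Mihailova

/-- **Mihailova's theorem: undecidability of the membership problem in `Fₙ × Fₙ`.**
For `n ≥ 2`, there is a finitely generated subgroup `H` of `Fₙ × Fₙ` such that
no computable function decides, given an element of `Fₙ × Fₙ` (encoded as a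
pair of words in the generators and their inverses), whether it lies in `H`. -/
theorem membership_problem_undecidable (n : ℕ) (hn : 2 ≤ n) :
    ∃ H : Subgroup (FreeGroup (Fin n) × FreeGroup (Fin n)), H.FG ∧
      ¬ ∃ f : List (Fin n × Bool) × List (Fin n × Bool) → Bool, Computable f ∧
        ∀ w : List (Fin n × Bool) × List (Fin n × Bool),
          (f w = true ↔ (FreeGroup.mk w.1, FreeGroup.mk w.2) ∈ H) := by
  have hab : (⟨0, by omega⟩ : Fin n) ≠ ⟨1, by omega⟩ := by simp
  obtain ⟨X, _, φ, R, u, hφ, hR, ⟨w, hw, hwu⟩, hu⟩ := exists_undecidable_normalClosure hab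
  obtain ⟨H, hH, hmem⟩ := exists_fg_subgroup_prod φ hφ hR
  refine ⟨H, hH, fun ⟨f, hf, hfH⟩ ↦ hu (ComputablePred.computable_iff.2
    ⟨fun m ↦ f (w m, []), hf.comp (hw.pair (Computable.const [])), funext fun m ↦ propext ?_⟩)⟩
  have hm : FreeGroup.mk (w m) = φ (u m) := hwu m
  rw [← hmem, ← hm]
  exact (hfH (w m, [])).symm
end

section
/- The matrices A = [[3,2],[1,1]] and B = [[1,1],[2,3]] in SL₂(ℤ) generate a free group of rank 2 in which every non-identity element is hyperbolic; that is, the group homomorphism from the free group F₂ on two generators to SL₂(ℤ) sending the generators to A and B is injective, and every non-identity element M of its image satisfies |Tr(M)| > 2. -/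
/-- The matrix `A = [[3,2],[1,1]]` in `SL₂(ℤ)`. -/
def matA : Matrix.SpecialLinearGroup (Fin 2) ℤ :=
  ⟨!![3, 2; 1, 1], by norm_num [Matrix.det_fin_two_of]⟩

/-- The matrix `B = [[1,1],[2,3]]` in `SL₂(ℤ)`. -/
def matB : Matrix.SpecialLinearGroup (Fin 2) ℤ :=
  ⟨!![1, 1; 2, 3], by norm_num [Matrix.det_fin_two_of]⟩

/-- The image in `SL₂(ℤ)` of a letter of the free group. -/
def letterMat (s : Fin 2 × Bool) : Matrix.SpecialLinearGroup (Fin 2) ℤ :=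
  cond s.2 (![matA, matB] s.1) (![matA, matB] s.1)⁻¹

/-- The columns of `coneMat s` span a cone in the plane. The four cones are the ping-pong
domains: the letter `s` maps the cone of every letter `u ≠ s⁻¹` into that of `s`, up to sign. -/
def coneMat (s : Fin 2 × Bool) : Matrix (Fin 2) (Fin 2) ℤ :=
  cond s.2 (![!![4, 6; -1, 5], !![5, -1; 6, 4]] s.1) (![!![-2, -9; 5, 10], !![-10, -5; 9, 2]] s.1)

/-- The entries of the matrix are all positive or all negative. -/
def Matrix.IsDefinite (N : Matrix (Fin 2) (Fin 2) ℤ) : Prop :=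
  (∀ i j, 0 < N i j) ∨ ∀ i j, N i j < 0

lemma Matrix.IsDefinite.mul {M N : Matrix (Fin 2) (Fin 2) ℤ} (hM : M.IsDefinite)
    (hN : N.IsDefinite) : (M * N).IsDefinite := by
  rcases hM with hM | hM <;> rcases hN with hN | hN
  · left; intro i j; rw [Matrix.mul_apply, Fin.sum_univ_two]
    nlinarith [mul_pos (hM i 0) (hN 0 j), mul_pos (hM i 1) (hN 1 j)]
  · right; intro i j; rw [Matrix.mul_apply, Fin.sum_univ_two]
    nlinarith [mul_neg_of_pos_of_neg (hM i 0) (hN 0 j), mul_neg_of_pos_of_neg (hM i 1) (hN 1 j)]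
  · right; intro i j; rw [Matrix.mul_apply, Fin.sum_univ_two]
    nlinarith [mul_neg_of_neg_of_pos (hM i 0) (hN 0 j), mul_neg_of_neg_of_pos (hM i 1) (hN 1 j)]
  · left; intro i j; rw [Matrix.mul_apply, Fin.sum_univ_two]
    nlinarith [mul_pos_of_neg_of_neg (hM i 0) (hN 0 j), mul_pos_of_neg_of_neg (hM i 1) (hN 1 j)]

lemma Matrix.IsDefinite.of_smul {d : ℤ} (hd : 0 < d) {N : Matrix (Fin 2) (Fin 2) ℤ}
    (h : (d • N).IsDefinite) : N.IsDefinite := by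
  refine h.imp (fun h i j ↦ ?_) (fun h i j ↦ ?_)
  · exact pos_of_mul_pos_right (by simpa using h i j) hd.le
  · exact neg_of_mul_neg_right (by simpa using h i j) hd.le

lemma Matrix.IsDefinite.four_mul_det_lt {N : Matrix (Fin 2) (Fin 2) ℤ} (h : N.IsDefinite) :
    4 * N.det < N.trace ^ 2 := by
  have hbc : 0 < N 0 1 * N 1 0 := by
    rcases h with h | h
    · exact mul_pos (h 0 1) (h 1 0)
    · exact mul_pos_of_neg_of_neg (h 0 1) (h 1 0)
  rw [Matrix.det_fin_two, Matrix.trace_fin_two]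
  nlinarith [sq_nonneg (N 0 0 - N 1 1)]

lemma det_coneMat_pos : ∀ s, 0 < (coneMat s).det := by
  simp only [Matrix.det_fin_two]
  decide

lemma isDefinite_adjugate_mul_letterMat_mul : ∀ s u : Fin 2 × Bool, (s.1 = u.1 → s.2 = u.2) →
    ((coneMat s).adjugate * (letterMat s).1 * coneMat u).IsDefinite := by
  unfold Matrix.IsDefinite letterMat
  simp only [Matrix.adjugate_fin_two, Matrix.mul_apply, Fin.sum_univ_two,
    Matrix.SpecialLinearGroup.SL2_inv_expl]
  decide

lemma isDefinite_adjugate_mul_prod_mul (L : List (Fin 2 × Bool)) (s u : Fin 2 × Bool)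
    (h : FreeGroup.IsReduced (s :: (L ++ [u]))) :
    ((coneMat s).adjugate * ((s :: L).map letterMat).prod.1 * coneMat u).IsDefinite := by
  induction L generalizing s with
  | nil =>
    simpa using isDefinite_adjugate_mul_letterMat_mul s u (by simpa [FreeGroup.IsReduced] using h)
  | cons t L ih =>
    rw [List.cons_append, FreeGroup.isReduced_cons_cons] at h
    have key := (isDefinite_adjugate_mul_letterMat_mul s t h.1).mul (ih t h.2)
    refine .of_smul (det_coneMat_pos t) ?_
    convert key using 1
    calc
      _ = (coneMat s).adjugate * (letterMat s).1 * ((coneMat t).det • (1 : Matrix _ _ ℤ)) *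
          ((t :: L).map letterMat).prod.1 * coneMat u := by
        rw [List.map_cons, List.prod_cons, Matrix.SpecialLinearGroup.coe_mul]
        simp only [Matrix.mul_smul, Matrix.smul_mul, Matrix.mul_one, Matrix.mul_assoc]
      _ = _ := by
        rw [← Matrix.mul_adjugate]
        simp only [Matrix.mul_assoc]

lemma two_lt_abs_trace_of_isCyclicallyReduced {L : List (Fin 2 × Bool)}
    (hL : FreeGroup.IsCyclicallyReduced L) (hne : L ≠ []) :
    2 < |(L.map letterMat).prod.1.trace| := by
  obtain ⟨s, L, rfl⟩ := List.exists_cons_of_ne_nil hne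
  have hred : FreeGroup.IsReduced (s :: (L ++ [s])) := by
    rw [← List.cons_append]
    refine List.isChain_append.2 ⟨hL.1, by simp, fun a ha b hb ↦ hL.2 a ha b (by simpa using hb)⟩
  have h := (isDefinite_adjugate_mul_prod_mul L s s hred).four_mul_det_lt
  set W := ((s :: L).map letterMat).prod
  have hd := det_coneMat_pos s
  rw [Matrix.det_mul, Matrix.det_mul, W.2, Matrix.det_adjugate, Matrix.mul_assoc,
    Matrix.trace_mul_comm, Matrix.mul_assoc, Matrix.mul_adjugate] at h
  simp only [Matrix.mul_smul, Matrix.trace_smul, smul_eq_mul, Fintype.card_fin,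
    Nat.add_one_sub_one, pow_one, mul_one, mul_pow, ← pow_two] at h
  have h4 : (2 : ℤ) ^ 2 < W.1.trace ^ 2 := by
    nlinarith [pow_pos hd 2]
  simpa using sq_lt_sq.1 h4

lemma two_lt_abs_trace_lift {g : FreeGroup (Fin 2)} (hg : g ≠ 1) :
    2 < |(FreeGroup.lift ![matA, matB] g).1.trace| := by
  set L := FreeGroup.reduceCyclically g.toWord
  set C := FreeGroup.mk (FreeGroup.reduceCyclically.conjugator g.toWord)
  have hgC : g = C * FreeGroup.mk L * C⁻¹ := by
    conv_lhs => rw [← FreeGroup.mk_toWord (x := g),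
      ← FreeGroup.reduceCyclically.conj_conjugator_reduceCyclically g.toWord]
    simp [C, L, FreeGroup.mul_mk, FreeGroup.inv_mk]
  have hne : L ≠ [] := by
    intro h
    rw [h, ← FreeGroup.one_eq_mk, mul_one, mul_inv_cancel] at hgC
    exact hg hgC
  have hL : FreeGroup.IsCyclicallyReduced L :=
    FreeGroup.reduceCyclically.isCyclicallyReduced FreeGroup.isReduced_toWord
  have hprod : FreeGroup.lift ![matA, matB] (FreeGroup.mk L) = (L.map letterMat).prod :=
    FreeGroup.lift_mk
  rw [hgC, map_mul, map_mul, hprod, map_inv, Matrix.SpecialLinearGroup.coe_mul,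
    Matrix.trace_mul_comm, ← Matrix.SpecialLinearGroup.coe_mul, inv_mul_cancel_left]
  exact two_lt_abs_trace_of_isCyclicallyReduced hL hne

/-- **A free group of hyperbolic matrices in `SL₂(ℤ)`.**
The matrices `A = [[3,2],[1,1]]` and `B = [[1,1],[2,3]]` generate a free group
of rank 2 in `SL₂(ℤ)`: the homomorphism `F₂ → SL₂(ℤ)` sending the generators
to `A` and `B` is injective, and every non-identity element `M` of its image
is hyperbolic, i.e. `|Tr M| > 2`. -/
theorem free_hyperbolic_subgroup_SL2Z :
    Function.Injective
        (FreeGroup.lift ![matA, matB] :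
          FreeGroup (Fin 2) →* Matrix.SpecialLinearGroup (Fin 2) ℤ) ∧
      ∀ M ∈ (FreeGroup.lift ![matA, matB] :
          FreeGroup (Fin 2) →* Matrix.SpecialLinearGroup (Fin 2) ℤ).range,
        M ≠ 1 → 2 < |Matrix.trace (M : Matrix (Fin 2) (Fin 2) ℤ)| := by
  refine ⟨(injective_iff_map_eq_one _).2 fun g hg ↦ ?_, ?_⟩
  · by_contra hne
    have h := two_lt_abs_trace_lift hne
    rw [hg] at h
    simp at h
  · rintro _ ⟨g, rfl⟩ hM
    exact two_lt_abs_trace_lift fun hg ↦ hM (by rw [hg, map_one])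
end

section
/- Let A, B ∈ SL₂(ℝ) be hyperbolic matrices (|Tr(A)| > 2 and |Tr(B)| > 2) such that the commutator C = A·B·A⁻¹·B⁻¹ satisfies Tr(C) < −2. Then A and B generate a free group of rank 2 in which every non-identity element is hyperbolic; that is, the homomorphism from the free group F₂ on two generators to SL₂(ℝ) sending the generators to A and B is injective, and every non-identity element M of its image satisfies |Tr(M)| > 2. -/
open Matrix

/-- The quadratic form `v ↦ det (v, M v)`, whose zeros are the eigenvectors of `M`. -/
def eigenForm (M : Matrix (Fin 2) (Fin 2) ℝ) (v : Fin 2 → ℝ) : ℝ :=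
  M 1 0 * v 0 ^ 2 + (M 1 1 - M 0 0) * v 0 * v 1 - M 0 1 * v 1 ^ 2

/-- Polarization of the discriminant of `eigenForm`. -/
def discPair (M N : Matrix (Fin 2) (Fin 2) ℝ) : ℝ :=
  (M 1 1 - M 0 0) * (N 1 1 - N 0 0) + 2 * M 0 1 * N 1 0 + 2 * M 1 0 * N 0 1

theorem mul_eigenForm_pos {M N : Matrix (Fin 2) (Fin 2) ℝ} (hM : discPair M M < 0)
    (hN : discPair N N < 0) (hMN : discPair M N < 0) {v : Fin 2 → ℝ} (hv : v ≠ 0) :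
    0 < N 1 0 * eigenForm M v := by
  simp only [discPair] at hM hN hMN
  simp only [eigenForm]
  have hv' : v 0 ≠ 0 ∨ v 1 ≠ 0 := by
    by_contra! h
    exact hv (by ext i; fin_cases i <;> simp [h])
  generalize v 0 = x at *
  generalize v 1 = y at *
  generalize M 0 1 = b at *
  generalize M 1 0 = c at *
  generalize M 1 1 - M 0 0 = m at *
  generalize N 0 1 = e at *
  generalize N 1 0 = f at *
  generalize N 1 1 - N 0 0 = n at *
  have hc : c ≠ 0 := by rintro rfl; nlinarith [sq_nonneg m]
  have hf : f ≠ 0 := by rintro rfl; nlinarith [sq_nonneg n]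
  have hcf : 0 < c * f := by
    by_contra! h
    have h1 : c * f < 0 := lt_of_le_of_ne h (mul_ne_zero hc hf)
    have h2 := mul_pos_of_neg_of_neg h1 hMN
    have h3 := mul_neg_of_pos_of_neg (pow_pos (abs_pos.2 hf) 2) hM
    have h4 := mul_neg_of_pos_of_neg (pow_pos (abs_pos.2 hc) 2) hN
    rw [sq_abs] at h3 h4
    nlinarith [sq_nonneg (m * f - n * c)]
  have hq : 0 < 4 * c * (c * x ^ 2 + m * x * y - b * y ^ 2) := by
    have : 4 * c * (c * x ^ 2 + m * x * y - b * y ^ 2)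
        = (2 * c * x + m * y) ^ 2 - (m * m + 2 * b * c + 2 * c * b) * y ^ 2 := by ring
    rw [this]
    by_cases hy : y = 0
    · subst hy
      have : x ≠ 0 := by simpa using hv'
      have : 0 < (2 * c * x) ^ 2 := by positivity
      simpa using this
    · have : 0 < y ^ 2 := by positivity
      nlinarith [sq_nonneg (2 * c * x + m * y)]
  have h := mul_pos hcf hq
  have hc2 : 0 < 4 * c ^ 2 := by positivity
  refine pos_of_mul_pos_right (b := f * (c * x ^ 2 + m * x * y - b * y ^ 2))
    (a := 4 * c ^ 2) ?_ hc2.le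
  linarith

/-- `tr (A B⁻¹)` for matrices of determinant one. -/
def quotTrace (A B : Matrix (Fin 2) (Fin 2) ℝ) : ℝ :=
  A.trace * B.trace - (A * B).trace

/-- The quantity `-2 - tr (A B A⁻¹ B⁻¹)` for matrices of determinant one. -/
def traceGap (A B : Matrix (Fin 2) (Fin 2) ℝ) : ℝ :=
  quotTrace A B * A.trace * B.trace - quotTrace A B ^ 2 - A.trace ^ 2 - B.trace ^ 2

/-- A traceless (up to scalars) matrix whose axis bounds the isometric half-plane of `A`. -/
def sideMatrix (A B : Matrix (Fin 2) (Fin 2) ℝ) : Matrix (Fin 2) (Fin 2) ℝ :=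
  (2 * quotTrace A B - A.trace * B.trace) • A + A.trace ^ 2 • B + A.trace • (A * B - B * A)

/-- The quadratic form that is nonnegative exactly on the attracting cone of `A`. -/
def coneForm (A B : Matrix (Fin 2) (Fin 2) ℝ) (v : Fin 2 → ℝ) : ℝ :=
  -((A * B - B * A) 1 0 * A.trace) * eigenForm (sideMatrix A B) v

/-- The quadratic form separating the attracting cones of `A`, `B` from those of their inverses. -/
def sepForm (A B : Matrix (Fin 2) (Fin 2) ℝ) (v : Fin 2 → ℝ) : ℝ :=
  -((A * B - B * A) 1 0 * quotTrace A B * A.trace * B.trace) *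
    eigenForm (B.trace • A - A.trace • B) v

theorem discPair_self (A : Matrix (Fin 2) (Fin 2) ℝ) :
    discPair A A = A.trace ^ 2 - 4 * A.det := by
  simp [discPair, trace_fin_two, det_fin_two]; ring

theorem discPair_eq (A B : Matrix (Fin 2) (Fin 2) ℝ) :
    discPair A B = A.trace * B.trace - 2 * quotTrace A B := by
  simp [discPair, trace_fin_two, quotTrace, Matrix.mul_apply]; ring

theorem discPair_comb (A B : Matrix (Fin 2) (Fin 2) ℝ) (i j k : ℝ) :
    discPair (i • A + j • B + k • (A * B - B * A)) (i • A + j • B + k • (A * B - B * A)) =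
      i ^ 2 * discPair A A + 2 * i * j * discPair A B + j ^ 2 * discPair B B
        + k ^ 2 * (discPair A B ^ 2 - discPair A A * discPair B B) := by
  simp [discPair, Matrix.mul_apply]; ring

theorem discPair_comb_commutator (A B : Matrix (Fin 2) (Fin 2) ℝ) (i j k : ℝ) :
    discPair (i • A + j • B + k • (A * B - B * A)) (A * B - B * A) =
      k * (discPair A B ^ 2 - discPair A A * discPair B B) := by
  simp [discPair, Matrix.mul_apply]; ring

theorem mul_eigenForm_comb_pos {A B : Matrix (Fin 2) (Fin 2) ℝ} {i j k : ℝ} (hk : 0 < k)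
    (hK : discPair A B ^ 2 - discPair A A * discPair B B < 0)
    (h : discPair (i • A + j • B + k • (A * B - B * A))
      (i • A + j • B + k • (A * B - B * A)) < 0)
    {v : Fin 2 → ℝ} (hv : v ≠ 0) :
    0 < (A * B - B * A) 1 0 * eigenForm (i • A + j • B + k • (A * B - B * A)) v := by
  refine mul_eigenForm_pos h ?_ ?_ hv
  · simpa using (discPair_comb_commutator A B 0 0 1).trans_lt (by simpa using hK)
  · rw [discPair_comb_commutator]
    exact mul_neg_of_pos_of_neg hk hK

section

variable {A B : Matrix (Fin 2) (Fin 2) ℝ}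

theorem quotTrace_comm : quotTrace B A = quotTrace A B := by
  simp [quotTrace, trace_mul_comm A B, mul_comm]

theorem traceGap_comm : traceGap B A = traceGap A B := by
  simp [traceGap, quotTrace_comm (A := A)]; ring

theorem discPair_gram (hA : A.det = 1) (hB : B.det = 1) :
    discPair A B ^ 2 - discPair A A * discPair B B = -4 * (traceGap A B + 4) := by
  rw [discPair_self, discPair_self, discPair_eq, hA, hB, traceGap]; ring

theorem traces_ne_zero (h : 0 < traceGap A B) :
    A.trace ≠ 0 ∧ B.trace ≠ 0 ∧ quotTrace A B ≠ 0 := by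
  simp only [traceGap] at h
  refine ⟨fun h0 => ?_, fun h0 => ?_, fun h0 => ?_⟩ <;> rw [h0] at h <;>
    nlinarith [sq_nonneg A.trace, sq_nonneg B.trace, sq_nonneg (quotTrace A B)]

theorem discPair_sideMatrix_pos (hA : A.det = 1) (hB : B.det = 1) (h : 0 < traceGap A B) :
    0 < discPair (sideMatrix A B) (sideMatrix A B) := by
  have key : discPair (sideMatrix A B) (sideMatrix A B) = 4 * (traceGap A B + B.trace ^ 2) * 4 := by
    rw [sideMatrix, discPair_comb, discPair_gram hA hB, discPair_self, discPair_self, discPair_eq,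
      hA, hB, traceGap]
    ring
  rw [key]
  nlinarith [sq_nonneg B.trace]

theorem coneForm_add_sepForm_neg (hA : A.det = 1) (hB : B.det = 1) (h : 0 < traceGap A B)
    {v : Fin 2 → ℝ} (hv : v ≠ 0) :
    quotTrace A B ^ 2 * coneForm A B v + 2 * sepForm A B v < 0 := by
  obtain ⟨hz, hy, hx⟩ := traces_ne_zero h
  have hgram := discPair_gram hA hB
  have hpos := mul_eigenForm_comb_pos (A := A) (B := B)
    (i := quotTrace A B * A.trace * (quotTrace A B * (2 * quotTrace A B - A.trace * B.trace)
      + 2 * B.trace ^ 2))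
    (j := quotTrace A B * A.trace * (quotTrace A B * A.trace ^ 2 - 2 * A.trace * B.trace))
    (k := (quotTrace A B * A.trace) ^ 2) (by positivity) (by rw [hgram]; linarith) (by
      have key : (quotTrace A B * A.trace) ^ 2 * (-16 * traceGap A B *
          (traceGap A B + A.trace ^ 2)) < 0 := by
        refine mul_neg_of_pos_of_neg (by positivity) ?_
        nlinarith [mul_pos h (add_pos_of_pos_of_nonneg h (sq_nonneg A.trace))]
      refine lt_of_eq_of_lt ?_ key
      rw [discPair_comb, hgram, discPair_self, discPair_self, discPair_eq, hA, hB, traceGap]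
      ring) hv
  refine neg_pos.1 (hpos.trans_eq ?_)
  simp only [coneForm, sepForm, sideMatrix, eigenForm, Matrix.add_apply, Matrix.sub_apply,
    Matrix.smul_apply, smul_eq_mul]
  ring

theorem coneForm_add_coneForm_neg (hA : A.det = 1) (hB : B.det = 1) (h : 0 < traceGap A B)
    {v : Fin 2 → ℝ} (hv : v ≠ 0) :
    coneForm A B v + coneForm B A v < 0 := by
  obtain ⟨hz, hy, hx⟩ := traces_ne_zero h
  have hgram := discPair_gram hA hB
  have hpos := mul_eigenForm_comb_pos (A := A) (B := B)
    (i := A.trace * (2 * quotTrace A B - A.trace * B.trace) - B.trace ^ 3)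
    (j := A.trace ^ 3 - B.trace * (2 * quotTrace A B - A.trace * B.trace))
    (k := A.trace ^ 2 + B.trace ^ 2) (by positivity) (by rw [hgram]; linarith) (by
      have key : -16 * traceGap A B * (traceGap A B + quotTrace A B ^ 2) < 0 := by
        nlinarith [mul_pos h (add_pos_of_pos_of_nonneg h (sq_nonneg (quotTrace A B)))]
      refine lt_of_eq_of_lt ?_ key
      rw [discPair_comb, hgram, discPair_self, discPair_self, discPair_eq, hA, hB, traceGap]
      ring) hv
  refine neg_pos.1 (hpos.trans_eq ?_)
  simp only [coneForm, sideMatrix, eigenForm, Matrix.add_apply, Matrix.sub_apply,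
    Matrix.smul_apply, smul_eq_mul, quotTrace_comm (A := A)]
  ring

theorem coneForm_mulVec (hA : A.det = 1) (v : Fin 2 → ℝ) :
    coneForm A B (A *ᵥ v) = -coneForm A.adjugate B.adjugate v := by
  have : coneForm A B (A *ᵥ v) = -(A.det * coneForm A.adjugate B.adjugate v) := by
    simp [coneForm, sideMatrix, quotTrace, eigenForm, Matrix.mul_apply, adjugate_fin_two,
      Matrix.mulVec, dotProduct, trace_fin_two, det_fin_two, Fin.sum_univ_two]
    ring
  rw [this, hA, one_mul]

theorem sepForm_comm (v : Fin 2 → ℝ) : sepForm B A v = sepForm A B v := by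
  simp only [sepForm, eigenForm, Matrix.sub_apply, Matrix.smul_apply, smul_eq_mul,
    quotTrace_comm (A := A)]
  ring

theorem quotTrace_adjugate : quotTrace A.adjugate B.adjugate = quotTrace A B := by
  simp [quotTrace, adjugate_fin_two, trace_fin_two, Matrix.mul_apply]; ring

theorem trace_adjugate_fin_two (A : Matrix (Fin 2) (Fin 2) ℝ) : A.adjugate.trace = A.trace := by
  simp [adjugate_fin_two, trace_fin_two, add_comm]

theorem traceGap_adjugate : traceGap A.adjugate B.adjugate = traceGap A B := by
  simp only [traceGap, quotTrace_adjugate, trace_adjugate_fin_two]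

theorem sepForm_adjugate (v : Fin 2 → ℝ) :
    sepForm A.adjugate B.adjugate v = -sepForm A B v := by
  simp only [sepForm, quotTrace_adjugate, trace_adjugate_fin_two]
  simp [eigenForm, adjugate_fin_two, Matrix.mul_apply]
  ring

theorem trace_commutator (hA : A.det = 1) (hB : B.det = 1) :
    (A * B * A.adjugate * B.adjugate).trace = -2 - traceGap A B := by
  have : (A * B * A.adjugate * B.adjugate).trace = A.trace ^ 2 * B.det + B.trace ^ 2 * A.det
      + (A * B).trace ^ 2 - (A * B).trace * A.trace * B.trace - 2 * A.det * B.det := by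
    simp [adjugate_fin_two, trace_fin_two, det_fin_two, Matrix.mul_apply]; ring
  rw [this, hA, hB, traceGap, quotTrace]; ring

end

/-- An indefinite binary quadratic form is `x * y` in a suitable basis. -/
theorem exists_hyperbolic_basis {N : Matrix (Fin 2) (Fin 2) ℝ} (hN : 0 < discPair N N) :
    ∃ s t : Fin 2 → ℝ, s 0 * t 1 - s 1 * t 0 ≠ 0 ∧
      ∀ x y : ℝ, eigenForm N (x • s + y • t) = x * y := by
  simp only [discPair] at hN
  simp only [eigenForm]
  generalize N 0 1 = b at *
  generalize N 1 0 = c at *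
  generalize N 1 1 - N 0 0 = m at *
  by_cases hc : c = 0
  · subst hc
    have hm : m ≠ 0 := by rintro rfl; simp at hN
    refine ⟨![1, 0], ![b / m ^ 2, 1 / m], by simpa using hm, fun x y => ?_⟩
    simp
    field_simp
    ring
  · obtain ⟨D, hD, hD2⟩ : ∃ D : ℝ, 0 < D ∧ D ^ 2 = m ^ 2 + 4 * b * c :=
      ⟨√(m ^ 2 + 4 * b * c), Real.sqrt_pos.2 (by linarith), Real.sq_sqrt (by linarith)⟩
    have hD0 := hD.ne'
    refine ⟨![-m + D, 2 * c], ![(-m - D) / (-4 * c * D ^ 2), 2 * c / (-4 * c * D ^ 2)], ?_,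
      fun x y => ?_⟩
    · have : (-m + D) * (2 * c / (-4 * c * D ^ 2)) - 2 * c * ((-m - D) / (-4 * c * D ^ 2))
          = -1 / D := by field_simp; ring
      change (-m + D) * (2 * c / (-4 * c * D ^ 2)) - 2 * c * ((-m - D) / (-4 * c * D ^ 2)) ≠ 0
      rw [this]
      exact div_ne_zero (by norm_num) hD0
    · have hb : b = (D ^ 2 - m ^ 2) / (4 * c) := by rw [hD2]; field_simp; ring
      subst hb
      simp
      field_simp
      ring

/-- A real unimodular matrix mapping a closed double cone into its interior is hyperbolic. -/
theorem two_lt_abs_trace_of_mapsTo_cone {M N : Matrix (Fin 2) (Fin 2) ℝ} (hM : M.det = 1)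
    (hN : 0 < discPair N N)
    (h : ∀ v, v ≠ 0 → 0 ≤ eigenForm N v → 0 < eigenForm N (M *ᵥ v)) : 2 < |M.trace| := by
  obtain ⟨s, t, hst, hq⟩ := exists_hyperbolic_basis hN
  have hst' : t 1 * s 0 - t 0 * s 1 ≠ 0 := by rwa [mul_comm (t 1), mul_comm (t 0)]
  obtain ⟨a, b, c, d, hs, ht, htr, hdet⟩ : ∃ a b c d : ℝ, M *ᵥ s = a • s + b • t ∧
      M *ᵥ t = c • s + d • t ∧ M.trace = a + d ∧ a * d - b * c = 1 := by
    rw [det_fin_two] at hM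
    refine ⟨((M *ᵥ s) 0 * t 1 - (M *ᵥ s) 1 * t 0) / (s 0 * t 1 - s 1 * t 0),
      (s 0 * (M *ᵥ s) 1 - s 1 * (M *ᵥ s) 0) / (s 0 * t 1 - s 1 * t 0),
      ((M *ᵥ t) 0 * t 1 - (M *ᵥ t) 1 * t 0) / (s 0 * t 1 - s 1 * t 0),
      (s 0 * (M *ᵥ t) 1 - s 1 * (M *ᵥ t) 0) / (s 0 * t 1 - s 1 * t 0), ?_, ?_, ?_, ?_⟩
    · ext i
      fin_cases i <;> simp [Matrix.mulVec, dotProduct, Fin.sum_univ_two] <;> field_simp <;> ring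
    · ext i
      fin_cases i <;> simp [Matrix.mulVec, dotProduct, Fin.sum_univ_two] <;> field_simp <;> ring
    · simp [Matrix.mulVec, dotProduct, Fin.sum_univ_two, trace_fin_two]; field_simp; ring
    · simp [Matrix.mulVec, dotProduct, Fin.sum_univ_two]; field_simp
      linear_combination (s 0 * t 1 - s 1 * t 0) ^ 2 * hM
  have key (x y : ℝ) (hx : 0 ≤ x) (hy : 0 ≤ y) (hxy : x ≠ 0 ∨ y ≠ 0) :
      0 < (a * x + c * y) * (b * x + d * y) := by
    have hv : x • s + y • t ≠ 0 := by
      intro h0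
      have h1 := congrFun h0 0
      have h2 := congrFun h0 1
      simp at h1 h2
      have hx0 : x * (s 0 * t 1 - s 1 * t 0) = 0 := by linear_combination t 1 * h1 - t 0 * h2
      have hy0 : y * (s 0 * t 1 - s 1 * t 0) = 0 := by linear_combination s 0 * h2 - s 1 * h1
      simp [hst] at hx0 hy0
      tauto
    have := h _ hv (by rw [hq]; positivity)
    rwa [mulVec_add, mulVec_smul, mulVec_smul, hs, ht,
      show x • (a • s + b • t) + y • (c • s + d • t) =
        (a * x + c * y) • s + (b * x + d * y) • t by module, hq] at this
  have hab : 0 < a * b := by simpa using key 1 0 zero_le_one le_rfl (by simp)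
  have hcd : 0 < c * d := by simpa using key 0 1 le_rfl zero_le_one (by simp)
  have ha : a ≠ 0 := by rintro rfl; simp at hab
  have hc : c ≠ 0 := by rintro rfl; simp at hcd
  have hac : 0 < a * c := by
    by_contra! hac
    have := key |c| |a| (abs_nonneg _) (abs_nonneg _) (by simp [ha])
    rcases ha.lt_or_gt with ha' | ha' <;> rcases hc.lt_or_gt with hc' | hc'
    · nlinarith
    · rw [abs_of_pos hc', abs_of_neg ha'] at this; nlinarith
    · rw [abs_of_neg hc', abs_of_pos ha'] at this; nlinarith
    · nlinarith
  have hbc : 0 < b * c := by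
    have := mul_pos hab hac
    have h2 : 0 < a ^ 2 := by positivity
    refine pos_of_mul_pos_right (a := a ^ 2) ?_ h2.le
    linarith
  rw [htr]
  refine lt_of_pow_lt_pow_left₀ 2 (abs_nonneg _) ?_
  rw [sq_abs]
  nlinarith [sq_nonneg (a - d)]

namespace FreeGroup

variable {α G V : Type*} [Group G] [AddCommGroup V] [DistribMulAction G V]

theorem lift_letter_pos {f : α → G} {Q : α × Bool → V → ℝ}
    (hg : ∀ l v, Q (l.1, !l.2) v < 0 → 0 < Q l (cond l.2 (f l.1) (f l.1)⁻¹ • v))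
    (hQ : ∀ l m v, l ≠ m → v ≠ 0 → 0 ≤ Q l v → Q m v < 0) (L : List (α × Bool)) :
    ∀ (l : α × Bool) (v : V), IsReduced (l :: L) → v ≠ 0 →
      Q (((l :: L).getLast (by simp)).1, !((l :: L).getLast (by simp)).2) v < 0 →
      0 < Q l (lift f (mk (l :: L)) • v) := by
  induction L with
  | nil =>
    intro l v _ _ h
    simpa using hg l v h
  | cons m L ih =>
    intro l v hr hv h
    rw [IsReduced, List.isChain_cons_cons] at hr
    have hm := ih m v hr.2 hv (by simpa using h)
    have hlm : m ≠ (l.1, !l.2) := by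
      rintro rfl
      simpa using hr.1 rfl
    have := hg l _ (hQ _ _ _ hlm ((smul_ne_zero_iff_ne _).2 hv) hm.le)
    rwa [smul_smul] at this

/-- Ping-pong for cyclically reduced words: each maps the cone of its first letter into the
interior of that cone. -/
theorem lift_pos_of_isCyclicallyReduced {f : α → G} {Q : α × Bool → V → ℝ}
    (hg : ∀ l v, Q (l.1, !l.2) v < 0 → 0 < Q l (cond l.2 (f l.1) (f l.1)⁻¹ • v))
    (hQ : ∀ l m v, l ≠ m → v ≠ 0 → 0 ≤ Q l v → Q m v < 0) {l : α × Bool} {L : List (α × Bool)}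
    (hL : IsCyclicallyReduced (l :: L)) {v : V} (hv : v ≠ 0) (hl : 0 ≤ Q l v) :
    0 < Q l (lift f (mk (l :: L)) • v) := by
  refine lift_letter_pos hg hQ L l v hL.isReduced hv (hQ _ _ _ ?_ hv hl)
  generalize hm : (l :: L).getLast (by simp) = m
  intro h
  have hmem : m ∈ (l :: L).getLast? := by rw [← hm]; exact List.getLast_mem_getLast? _
  have := hL.2 m hmem l (by simp) (by rw [h])
  simp [h] at this

theorem exists_conj_isCyclicallyReduced (w : FreeGroup α) :
    ∃ (g : FreeGroup α) (L : List (α × Bool)),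
      IsCyclicallyReduced L ∧ w = g * mk L * g⁻¹ := by
  classical
  refine ⟨mk (reduceCyclically.conjugator w.toWord), reduceCyclically w.toWord,
    reduceCyclically.isCyclicallyReduced isReduced_toWord, ?_⟩
  rw [inv_mk, mul_mk, mul_mk, reduceCyclically.conj_conjugator_reduceCyclically, mk_toWord]

end FreeGroup

section

variable {A B : Matrix.SpecialLinearGroup (Fin 2) ℝ}

theorem coneForm_neg_of_same_sign (h : 0 < traceGap (A : Matrix (Fin 2) (Fin 2) ℝ) B)
    {v : Fin 2 → ℝ} (hv : v ≠ 0) (hc : 0 ≤ coneForm (A : Matrix (Fin 2) (Fin 2) ℝ) B v) :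
    coneForm (B : Matrix (Fin 2) (Fin 2) ℝ) A v < 0 := by
  linarith [coneForm_add_coneForm_neg A.2 B.2 h hv]

theorem sepForm_neg_of_coneForm_nonneg (h : 0 < traceGap (A : Matrix (Fin 2) (Fin 2) ℝ) B)
    {v : Fin 2 → ℝ} (hv : v ≠ 0) (hc : 0 ≤ coneForm (A : Matrix (Fin 2) (Fin 2) ℝ) B v) :
    sepForm (A : Matrix (Fin 2) (Fin 2) ℝ) B v < 0 := by
  have := coneForm_add_sepForm_neg A.2 B.2 h hv
  nlinarith [mul_nonneg (sq_nonneg (quotTrace (A : Matrix (Fin 2) (Fin 2) ℝ) B)) hc]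

theorem traceGap_inv (h : 0 < traceGap (A : Matrix (Fin 2) (Fin 2) ℝ) B) :
    0 < traceGap ((A⁻¹ : Matrix.SpecialLinearGroup (Fin 2) ℝ) : Matrix (Fin 2) (Fin 2) ℝ)
      (B⁻¹ : Matrix.SpecialLinearGroup (Fin 2) ℝ) := by
  rwa [Matrix.SpecialLinearGroup.coe_inv, Matrix.SpecialLinearGroup.coe_inv, traceGap_adjugate]

theorem sepForm_inv (v : Fin 2 → ℝ) :
    sepForm ((A⁻¹ : Matrix.SpecialLinearGroup (Fin 2) ℝ) : Matrix (Fin 2) (Fin 2) ℝ)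
      (B⁻¹ : Matrix.SpecialLinearGroup (Fin 2) ℝ) v =
      -sepForm (A : Matrix (Fin 2) (Fin 2) ℝ) B v := by
  rw [Matrix.SpecialLinearGroup.coe_inv, Matrix.SpecialLinearGroup.coe_inv, sepForm_adjugate]

theorem coneForm_inv_neg (h : 0 < traceGap (A : Matrix (Fin 2) (Fin 2) ℝ) B)
    {v : Fin 2 → ℝ} (hv : v ≠ 0) (hc : 0 ≤ coneForm (A : Matrix (Fin 2) (Fin 2) ℝ) B v) :
    coneForm ((A⁻¹ : Matrix.SpecialLinearGroup (Fin 2) ℝ) : Matrix (Fin 2) (Fin 2) ℝ)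
      (B⁻¹ : Matrix.SpecialLinearGroup (Fin 2) ℝ) v < 0 := by
  by_contra! hc'
  have h1 := sepForm_neg_of_coneForm_nonneg h hv hc
  have h2 := sepForm_neg_of_coneForm_nonneg (traceGap_inv h) hv hc'
  rw [sepForm_inv] at h2
  linarith

theorem coneForm_inv_swap_neg (h : 0 < traceGap (A : Matrix (Fin 2) (Fin 2) ℝ) B)
    {v : Fin 2 → ℝ} (hv : v ≠ 0) (hc : 0 ≤ coneForm (A : Matrix (Fin 2) (Fin 2) ℝ) B v) :
    coneForm ((B⁻¹ : Matrix.SpecialLinearGroup (Fin 2) ℝ) : Matrix (Fin 2) (Fin 2) ℝ)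
      (A⁻¹ : Matrix.SpecialLinearGroup (Fin 2) ℝ) v < 0 := by
  by_contra! hc'
  have h1 := sepForm_neg_of_coneForm_nonneg h hv hc
  have h2 := sepForm_neg_of_coneForm_nonneg (traceGap_inv (traceGap_comm.symm ▸ h)) hv hc'
  rw [sepForm_inv, sepForm_comm] at h2
  linarith

end

/-- The element of `SL₂(ℝ)` attached to a letter, an inverse for the sign `false`. -/
def letterMatrix (A B : Matrix.SpecialLinearGroup (Fin 2) ℝ) (l : Fin 2 × Bool) :
    Matrix.SpecialLinearGroup (Fin 2) ℝ :=
  cond l.2 (![A, B] l.1) (![A, B] l.1)⁻¹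

/-- The quadratic form defining the attracting cone of a letter. -/
def letterForm (A B : Matrix.SpecialLinearGroup (Fin 2) ℝ) (l : Fin 2 × Bool)
    (v : Fin 2 → ℝ) : ℝ :=
  coneForm (letterMatrix A B l : Matrix (Fin 2) (Fin 2) ℝ) (letterMatrix A B (l.1 + 1, l.2)) v

section

variable {A B : Matrix.SpecialLinearGroup (Fin 2) ℝ}

theorem letterMatrix_not (l : Fin 2 × Bool) :
    letterMatrix A B (l.1, !l.2) = (letterMatrix A B l)⁻¹ := by
  obtain ⟨i, b⟩ := l
  cases b <;> simp [letterMatrix]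

theorem letterForm_smul (l : Fin 2 × Bool) (v : Fin 2 → ℝ) :
    letterForm A B l (letterMatrix A B l • v) = -letterForm A B (l.1, !l.2) v := by
  have h := letterMatrix_not (A := A) (B := B) (l.1 + 1, l.2)
  rw [letterForm, letterForm, letterMatrix_not, h, Matrix.SpecialLinearGroup.coe_inv,
    Matrix.SpecialLinearGroup.coe_inv, ← coneForm_mulVec (letterMatrix A B l).2]
  rfl

theorem traceGap_letterMatrix (h : 0 < traceGap (A : Matrix (Fin 2) (Fin 2) ℝ) B)
    (l : Fin 2 × Bool) :
    0 < traceGap (letterMatrix A B l : Matrix (Fin 2) (Fin 2) ℝ)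
      (letterMatrix A B (l.1 + 1, l.2)) := by
  have h' : 0 < traceGap (B : Matrix (Fin 2) (Fin 2) ℝ) A := traceGap_comm.symm ▸ h
  obtain ⟨i, b⟩ := l
  fin_cases i <;> cases b
  exacts [traceGap_inv h, h, traceGap_inv h', h']

theorem letterForm_neg (h : 0 < traceGap (A : Matrix (Fin 2) (Fin 2) ℝ) B)
    {l m : Fin 2 × Bool} {v : Fin 2 → ℝ} (hlm : l ≠ m) (hv : v ≠ 0)
    (hl : 0 ≤ letterForm A B l v) : letterForm A B m v < 0 := by
  have hgap := traceGap_letterMatrix h l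
  have hadd : ∀ i j : Fin 2, i ≠ j → j = i + 1 ∧ i = j + 1 := by decide
  obtain ⟨i, b⟩ := l
  obtain ⟨j, c⟩ := m
  rcases Bool.eq_or_eq_not c b with rfl | rfl <;> by_cases hij : i = j
  · exact absurd (by rw [hij]) hlm
  · have := coneForm_neg_of_same_sign hgap hv hl
    rw [letterForm, ← (hadd i j hij).2]
    rwa [← (hadd i j hij).1] at this
  · subst hij
    have := coneForm_inv_neg hgap hv hl
    rwa [← letterMatrix_not, ← letterMatrix_not] at this
  · have := coneForm_inv_swap_neg hgap hv hl
    rw [← letterMatrix_not, ← letterMatrix_not, ← (hadd i j hij).1] at this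
    rwa [letterForm, ← (hadd i j hij).2]

open FreeGroup in
theorem two_lt_abs_trace_lift_s9 (h : 0 < traceGap (A : Matrix (Fin 2) (Fin 2) ℝ) B)
    {w : FreeGroup (Fin 2)} (hw : w ≠ 1) :
    2 < |(lift ![A, B] w : Matrix (Fin 2) (Fin 2) ℝ).trace| := by
  obtain ⟨g, L, hL, rfl⟩ := exists_conj_isCyclicallyReduced w
  have htr : (lift ![A, B] (g * mk L * g⁻¹) : Matrix (Fin 2) (Fin 2) ℝ).trace =
      (lift ![A, B] (mk L) : Matrix (Fin 2) (Fin 2) ℝ).trace := by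
    rw [_root_.map_mul, Matrix.SpecialLinearGroup.coe_mul, trace_mul_comm,
      ← Matrix.SpecialLinearGroup.coe_mul, ← _root_.map_mul, show g⁻¹ * (g * mk L) = mk L by group]
  rw [htr]
  cases L with
  | nil => exact absurd (by simp [← one_eq_mk]) hw
  | cons l L =>
    have hgap := traceGap_letterMatrix h l
    set P := (letterMatrix A B l : Matrix (Fin 2) (Fin 2) ℝ) with hP
    set R := (letterMatrix A B (l.1 + 1, l.2) : Matrix (Fin 2) (Fin 2) ℝ) with hR
    have hform (v : Fin 2 → ℝ) : letterForm A B l v =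
        eigenForm ((-((P * R - R * P) 1 0 * P.trace)) • sideMatrix P R) v := by
      simp only [letterForm, coneForm, eigenForm, Matrix.smul_apply, smul_eq_mul, ← hP, ← hR]
      ring
    refine two_lt_abs_trace_of_mapsTo_cone (lift ![A, B] (mk (l :: L))).2
      (N := (-((P * R - R * P) 1 0 * P.trace)) • sideMatrix P R) ?_ fun v hv hv' => ?_
    · have hside := discPair_sideMatrix_pos (letterMatrix A B l).2 (letterMatrix A B _).2 hgap
      have hK : (P * R - R * P) 1 0 ≠ 0 := by
        intro h0
        have h1 := discPair_comb_commutator P R 0 0 1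
        rw [discPair_gram (letterMatrix A B l).2 (letterMatrix A B _).2] at h1
        simp only [zero_smul, one_smul, zero_add, discPair, h0] at h1
        nlinarith [sq_nonneg ((P * R - R * P) 1 1 - (P * R - R * P) 0 0)]
      have hc : 0 < (-((P * R - R * P) 1 0 * P.trace)) ^ 2 :=
        sq_pos_of_ne_zero (neg_ne_zero.2 (mul_ne_zero hK (traces_ne_zero hgap).1))
      refine (mul_pos hc hside).trans_eq ?_
      simp only [discPair, Matrix.smul_apply, smul_eq_mul]
      ring
    · rw [← hform] at hv'
      have := lift_pos_of_isCyclicallyReduced (f := ![A, B]) (Q := letterForm A B)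
        (fun l v hlv => by
          have := letterForm_smul (A := A) (B := B) l v
          rw [letterMatrix] at this
          rw [this]
          exact neg_pos.2 hlv)
        (fun l m v => letterForm_neg h) hL hv hv'
      rwa [hform] at this

end

/-- **Ping-pong criterion for free hyperbolic subgroups of `SL₂(ℝ)`.**
If `A, B ∈ SL₂(ℝ)` are hyperbolic and the commutator `C = A B A⁻¹ B⁻¹`
satisfies `Tr C < -2`, then `A` and `B` generate a free group of rank 2 in
which every non-identity element is hyperbolic. -/
theorem free_hyperbolic_of_commutator_trace
    (A B : Matrix.SpecialLinearGroup (Fin 2) ℝ)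
    (hA : 2 < |Matrix.trace (A : Matrix (Fin 2) (Fin 2) ℝ)|)
    (hB : 2 < |Matrix.trace (B : Matrix (Fin 2) (Fin 2) ℝ)|)
    (hC : Matrix.trace ((A * B * A⁻¹ * B⁻¹ :
        Matrix.SpecialLinearGroup (Fin 2) ℝ) : Matrix (Fin 2) (Fin 2) ℝ) < -2) :
    Function.Injective
        (FreeGroup.lift ![A, B] :
          FreeGroup (Fin 2) →* Matrix.SpecialLinearGroup (Fin 2) ℝ) ∧
      ∀ M ∈ (FreeGroup.lift ![A, B] :
          FreeGroup (Fin 2) →* Matrix.SpecialLinearGroup (Fin 2) ℝ).range,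
        M ≠ 1 → 2 < |Matrix.trace (M : Matrix (Fin 2) (Fin 2) ℝ)| := by
  have h : 0 < traceGap (A : Matrix (Fin 2) (Fin 2) ℝ) B := by
    rw [Matrix.SpecialLinearGroup.coe_mul, Matrix.SpecialLinearGroup.coe_mul,
      Matrix.SpecialLinearGroup.coe_mul, Matrix.SpecialLinearGroup.coe_inv,
      Matrix.SpecialLinearGroup.coe_inv, trace_commutator A.2 B.2] at hC
    linarith
  constructor
  · refine (injective_iff_map_eq_one _).2 fun w hw => ?_
    by_contra hne
    have := two_lt_abs_trace_lift_s9 h hne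
    rw [hw] at this
    simp at this
  · rintro _ ⟨w, rfl⟩ hw
    exact two_lt_abs_trace_lift_s9 h (by rintro rfl; exact hw (map_one _))
end
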